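/- arXiv:0801.0300 — 3 statements merged into one kernel-verified Lean document; each statement's English description precedes it below -/
import Mathlib

section
/- If A₀, A₁, A₂, A₃ are real analytic on a connected open U ⊆ ℝ² and the vector space of real-analytic solutions (ψ₁,ψ₂,ψ₃) of the Liouville linear system on U has dimension d ≥ 2, then this space contains d linearly independent solutions each of which satisfies ψ₁ψ₃ − ψ₂² ≠ 0 at some point of U (i.e. each defines a nondegenerate quadratic form somewhere on U). -/
/-!
The form `ψ₁ψ₃ - ψ₂²` on triples has no totally isotropic planes. So if every solution were
degenerate everywhere, any two solutions `Ψ`, `Φ` would be pointwise proportional, `Φ = f Ψ` near a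
point where `Ψ ≠ 0`. As the symbol of the Liouville system is injective in the covector, `Ψ` and
`f Ψ` can both be solutions only if `df = 0`. Hence `f` is locally constant, and `Φ = c Ψ` on all of
`U` by the identity theorem. Two independent solutions thus produce a solution `X` which is
nondegenerate at some point `q`. Now replace each basis element `Ψ` by `Ψ + t X`: for all but
finitely many `t` these are nondegenerate at `q` and still independent.
-/

noncomputable section

open Matrix

/-- Partial derivative in the first (x) variable. -/
def pdx (f : ℝ × ℝ → ℝ) : ℝ × ℝ → ℝ :=
  fun p => deriv (fun t => f (t, p.2)) p.1

/-- Partial derivative in the second (y) variable. -/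
def pdy (f : ℝ × ℝ → ℝ) : ℝ × ℝ → ℝ :=
  fun p => deriv (fun t => f (p.1, t)) p.2

/-- `pd 0 = ∂ₓ`, `pd 1 = ∂_y`. -/
def pd : Fin 2 → (ℝ × ℝ → ℝ) → (ℝ × ℝ → ℝ) := ![pdx, pdy]

/-- The Liouville linear system associated to `(A0, A1, A2, A3)`, holding on `U`. -/
def LiouvilleSystem (U : Set (ℝ × ℝ)) (A0 A1 A2 A3 ψ1 ψ2 ψ3 : ℝ × ℝ → ℝ) : Prop :=
  ∀ p ∈ U,
    pdx ψ1 p = (2/3) * A1 p * ψ1 p - 2 * A0 p * ψ2 p ∧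
    pdy ψ3 p = 2 * A3 p * ψ2 p - (2/3) * A2 p * ψ3 p ∧
    pdy ψ1 p + 2 * pdx ψ2 p
      = (4/3) * A2 p * ψ1 p - (2/3) * A1 p * ψ2 p - 2 * A0 p * ψ3 p ∧
    pdx ψ3 p + 2 * pdy ψ2 p
      = 2 * A3 p * ψ1 p - (4/3) * A1 p * ψ3 p + (2/3) * A2 p * ψ2 p

/-- `(A0, A1, A2, A3)` is metrisable near `p` (within `U`). -/
def MetrisableNear (U : Set (ℝ × ℝ)) (A0 A1 A2 A3 : ℝ × ℝ → ℝ) (p : ℝ × ℝ) : Prop :=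
  ∃ V : Set (ℝ × ℝ), IsOpen V ∧ p ∈ V ∧ V ⊆ U ∧
    ∃ E F G : ℝ × ℝ → ℝ,
      ContDiffOn ℝ (⊤ : ℕ∞) E V ∧ ContDiffOn ℝ (⊤ : ℕ∞) F V ∧ ContDiffOn ℝ (⊤ : ℕ∞) G V ∧
      (∀ q ∈ V, E q * G q - (F q) ^ 2 ≠ 0) ∧
      (∀ q ∈ V,
        A0 q = (E q * pdy E q - 2 * E q * pdx F q + F q * pdx E q)
                 / (2 * (E q * G q - (F q) ^ 2)) ∧
        A1 q = (3 * F q * pdy E q + G q * pdx E q - 2 * F q * pdx F q - 2 * E q * pdx G q)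
                 / (2 * (E q * G q - (F q) ^ 2)) ∧
        A2 q = (2 * F q * pdy F q + 2 * G q * pdy E q - 3 * F q * pdx G q - E q * pdy G q)
                 / (2 * (E q * G q - (F q) ^ 2)) ∧
        A3 q = (2 * G q * pdy F q - G q * pdx G q - F q * pdy G q)
                 / (2 * (E q * G q - (F q) ^ 2)))

end

/-- A real-analytic solution of the Liouville linear system on `U`. -/
def AnalyticLiouvilleSol (U : Set (ℝ × ℝ)) (A0 A1 A2 A3 : ℝ × ℝ → ℝ)
    (Ψ : (ℝ × ℝ → ℝ) × (ℝ × ℝ → ℝ) × (ℝ × ℝ → ℝ)) : Prop :=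
  AnalyticOnNhd ℝ Ψ.1 U ∧ AnalyticOnNhd ℝ Ψ.2.1 U ∧ AnalyticOnNhd ℝ Ψ.2.2 U ∧
    LiouvilleSystem U A0 A1 A2 A3 Ψ.1 Ψ.2.1 Ψ.2.2

/-- A family of solutions is linearly independent as functions on `U`. -/
def LinIndepOnU (U : Set (ℝ × ℝ)) {d : ℕ}
    (b : Fin d → (ℝ × ℝ → ℝ) × (ℝ × ℝ → ℝ) × (ℝ × ℝ → ℝ)) : Prop :=
  ∀ c : Fin d → ℝ,
    (∀ p ∈ U, (∑ m, c m * (b m).1 p) = 0 ∧ (∑ m, c m * (b m).2.1 p) = 0 ∧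
      (∑ m, c m * (b m).2.2 p) = 0) → c = 0

open scoped Topology

section LinearAlgebra

variable {K V ι : Type*} [Field K] [AddCommGroup V] [Module K V]

theorem exists_sum_eq_one_and_linearCombination_eq_neg_smul {b : ι → V} (hb : LinearIndependent K b)
    {v : V} {t : K} (ht : ¬ LinearIndependent K fun i => b i + t • v) :
    ∃ a : ι →₀ K, a.sum (fun _ x => x) = 1 ∧ Finsupp.linearCombination K b a = -(t • v) := by
  obtain ⟨a, ha, ha0⟩ : ∃ a : ι →₀ K,
      Finsupp.linearCombination K (fun i => b i + t • v) a = 0 ∧ a ≠ 0 := by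
    simpa [linearIndependent_iff] using ht
  have hrel : Finsupp.linearCombination K b a + a.sum (fun _ x => x) • t • v = 0 := by
    simpa [Finsupp.linearCombination_apply, Finsupp.sum, smul_add, Finset.sum_add_distrib,
      Finset.sum_smul] using ha
  have hsum : a.sum (fun _ x => x) ≠ 0 := fun h =>
    ha0 (linearIndependent_iff.1 hb a (by simpa [h] using hrel))
  refine ⟨(a.sum fun _ x => x)⁻¹ • a, ?_, ?_⟩
  · rw [Finsupp.sum_smul_index' fun _ => rfl]
    simp only [smul_eq_mul, ← Finsupp.mul_sum, inv_mul_cancel₀ hsum]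
  · rw [map_smul, eq_neg_of_add_eq_zero_left hrel, smul_neg, inv_smul_smul₀ hsum]

theorem subsingleton_setOfPred_not_linearIndependent_add_smul {b : ι → V}
    (hb : LinearIndependent K b) (v : V) :
    {t : K | ¬ LinearIndependent K fun i => b i + t • v}.Subsingleton := by
  intro s hs t ht
  obtain ⟨a, ha, hav⟩ := exists_sum_eq_one_and_linearCombination_eq_neg_smul hb hs
  obtain ⟨a', ha', hav'⟩ := exists_sum_eq_one_and_linearCombination_eq_neg_smul hb ht
  have proportional : t • a = s • a' := hb.finsuppLinearCombination_injective (by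
    rw [map_smul, map_smul, hav, hav', smul_neg, smul_neg, smul_comm])
  have coeff_sums_eq := congrArg (fun c : ι →₀ K => c.sum fun _ x => x) proportional
  simpa [Finsupp.sum_smul_index', ← Finsupp.mul_sum, ha, ha'] using coeff_sums_eq.symm

theorem finite_setOfPred_quadraticForm_add_smul_eq_zero (Q : QuadraticForm K V) {v : V}
    (hv : Q v ≠ 0) (w : V) : {t : K | Q (w + t • v) = 0}.Finite := by
  open Polynomial in
  have hP : C (Q v) * X ^ 2 + C (QuadraticMap.polar Q w v) * X + C (Q w) ≠ 0 :=
    leadingCoeff_ne_zero.1 (by rwa [leadingCoeff_quadratic hv])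
  refine (Polynomial.finite_setOfPred_isRoot hP).subset fun t (ht : Q (w + t • v) = 0) => ?_
  simp only [QuadraticMap.map_add, QuadraticMap.map_smul, QuadraticMap.polar_smul_right,
    smul_eq_mul] at ht
  simp only [Set.mem_ofPred_eq, Polynomial.IsRoot, Polynomial.eval_add, Polynomial.eval_mul,
    Polynomial.eval_C, Polynomial.eval_pow, Polynomial.eval_X]
  linear_combination ht

theorem exists_linearIndependent_add_smul_and_quadraticForm_ne_zero [Infinite K] [Finite ι]
    (Q : QuadraticForm K V) {v : V} (hv : Q v ≠ 0) {b : ι → V} (hb : LinearIndependent K b) :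
    ∃ t : K, LinearIndependent K (fun i => b i + t • v) ∧ ∀ i, Q (b i + t • v) ≠ 0 := by
  obtain ⟨t, ht⟩ := ((subsingleton_setOfPred_not_linearIndependent_add_smul hb v).finite.union
    (Set.finite_iUnion fun i =>
      finite_setOfPred_quadraticForm_add_smul_eq_zero Q hv (b i))).exists_notMem
  exact ⟨t, by simpa using ht⟩

end LinearAlgebra

section BinaryForms

/-- The determinant `ac - b²` of the binary quadratic form `a X² + 2b XY + c Y²`, itself a
quadratic form in `(a, b, c)`. It is the nondegeneracy condition `ψ₁ψ₃ - ψ₂²` of a solution. -/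
def binaryFormDet (R : Type*) [CommRing R] : QuadraticForm R (R × R × R) :=
  QuadraticMap.linMulLin (LinearMap.fst R R (R × R))
      (LinearMap.snd R R R ∘ₗ LinearMap.snd R R (R × R)) -
    QuadraticMap.sq.comp (LinearMap.fst R R R ∘ₗ LinearMap.snd R R (R × R))

theorem binaryFormDet_apply {R : Type*} [CommRing R] (u : R × R × R) :
    binaryFormDet R u = u.1 * u.2.2 - u.2.1 ^ 2 := by
  simp [binaryFormDet, sq]

theorem minors_eq_zero_of_binaryFormDet_eq_zero {R : Type*} [CommRing R] [IsReduced R]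
    {u v : R × R × R} (hu : binaryFormDet R u = 0) (hv : binaryFormDet R v = 0)
    (huv : binaryFormDet R (u + v) = 0) :
    u.1 * v.2.1 = v.1 * u.2.1 ∧ u.1 * v.2.2 = v.1 * u.2.2 ∧ u.2.2 * v.2.1 = v.2.2 * u.2.1 := by
  simp only [binaryFormDet_apply, Prod.fst_add, Prod.snd_add] at hu hv huv
  have polar_eq_zero : u.1 * v.2.2 + v.1 * u.2.2 - 2 * u.2.1 * v.2.1 = 0 := by
    linear_combination huv - hu - hv
  -- The square of each minor lies in the ideal generated by `det u`, `det v` and their polar form.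
  refine ⟨sub_eq_zero.1 ((pow_eq_zero_iff two_ne_zero).1 ?_),
    sub_eq_zero.1 ((pow_eq_zero_iff two_ne_zero).1 ?_),
    sub_eq_zero.1 ((pow_eq_zero_iff two_ne_zero).1 ?_)⟩
  · linear_combination u.1 * v.1 * polar_eq_zero - u.1 ^ 2 * hv - v.1 ^ 2 * hu
  · linear_combination (u.1 * v.2.2 + v.1 * u.2.2 + 2 * u.2.1 * v.2.1) * polar_eq_zero
      - 4 * v.1 * v.2.2 * hu - 4 * u.2.1 ^ 2 * hv
  · linear_combination u.2.2 * v.2.2 * polar_eq_zero - u.2.2 ^ 2 * hv - v.2.2 ^ 2 * hu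

theorem exists_eq_smul_of_binaryFormDet_eq_zero {K : Type*} [Field K] {u v : K × K × K}
    (hu0 : u ≠ 0) (hu : binaryFormDet K u = 0) (hv : binaryFormDet K v = 0)
    (huv : binaryFormDet K (u + v) = 0) : ∃ c : K, v = c • u := by
  obtain ⟨h12, h13, h32⟩ := minors_eq_zero_of_binaryFormDet_eq_zero hu hv huv
  obtain ⟨a, b, c⟩ := u
  obtain ⟨a', b', c'⟩ := v
  simp only [binaryFormDet_apply] at hu h12 h13 h32
  by_cases ha : a = 0
  · have hb : b = 0 := by simpa [ha] using hu
    have hc : c ≠ 0 := by rintro rfl; simp [ha, hb] at hu0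
    refine ⟨c' / c, ?_⟩
    simp only [Prod.smul_mk, smul_eq_mul, Prod.mk.injEq]
    refine ⟨?_, ?_, ?_⟩ <;> field_simp
    · linear_combination -h13
    · linear_combination h32
  · refine ⟨a' / a, ?_⟩
    simp only [Prod.smul_mk, smul_eq_mul, Prod.mk.injEq]
    refine ⟨?_, ?_, ?_⟩ <;> field_simp
    · linear_combination h12
    · linear_combination h13

end BinaryForms

section LocalProportionality

variable {𝕜 E F : Type*} [NormedAddCommGroup E] [NormedAddCommGroup F]

theorem exists_analyticAt_eventuallyEq_smul [NontriviallyNormedField 𝕜] [NormedSpace 𝕜 E]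
    [NormedSpace 𝕜 F] [SeparatingDual 𝕜 F] {g h : E → F} {p : E} (hg : AnalyticAt 𝕜 g p)
    (hh : AnalyticAt 𝕜 h p) (hgp : g p ≠ 0) (hgh : ∀ᶠ q in 𝓝 p, ∃ c : 𝕜, h q = c • g q) :
    ∃ f : E → 𝕜, AnalyticAt 𝕜 f p ∧ ∀ᶠ q in 𝓝 p, h q = f q • g q := by
  obtain ⟨ℓ, hℓ⟩ := SeparatingDual.exists_ne_zero (R := 𝕜) hgp
  have hℓg : AnalyticAt 𝕜 (fun q => ℓ (g q)) p := (ℓ.analyticAt _).comp hg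
  refine ⟨fun q => ℓ (h q) / ℓ (g q), ((ℓ.analyticAt _).comp hh).fun_div hℓg hℓ, ?_⟩
  filter_upwards [hgh, hℓg.continuousAt.eventually_ne hℓ] with q ⟨c, hc⟩ hq
  rw [hc, map_smul, smul_eq_mul, mul_div_cancel_right₀ c hq]

theorem eventually_eq_of_eventually_fderiv_eq_zero [RCLike 𝕜] [NormedSpace 𝕜 E] [NormedSpace 𝕜 F]
    {f : E → F} {p : E} (hf : ∀ᶠ q in 𝓝 p, DifferentiableAt 𝕜 f q)
    (hf' : ∀ᶠ q in 𝓝 p, fderiv 𝕜 f q = 0) : ∀ᶠ q in 𝓝 p, f q = f p := by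
  let := NormedSpace.restrictScalars ℝ 𝕜 E
  obtain ⟨r, hr, hball⟩ := Metric.eventually_nhds_iff_ball.1 (hf.and hf')
  filter_upwards [Metric.ball_mem_nhds p hr] with q hq
  exact Metric.isOpen_ball.is_const_of_fderiv_eq_zero (convex_ball p r).isPreconnected
    (fun z hz => (hball z hz).1.differentiableWithinAt) (fun z hz => (hball z hz).2) hq
    (Metric.mem_ball_self hr)

end LocalProportionality

section PartialDerivatives

variable {f g : ℝ × ℝ → ℝ} {p : ℝ × ℝ}

theorem pdx_eq_fderiv (hf : DifferentiableAt ℝ f p) : pdx f p = fderiv ℝ f p (1, 0) :=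
  (hf.hasFDerivAt.comp_hasDerivAt (f := fun t : ℝ => (t, p.2)) p.1
    ((hasDerivAt_id p.1).prodMk (hasDerivAt_const p.1 p.2))).deriv

theorem pdy_eq_fderiv (hf : DifferentiableAt ℝ f p) : pdy f p = fderiv ℝ f p (0, 1) :=
  (hf.hasFDerivAt.comp_hasDerivAt (f := fun t : ℝ => (p.1, t)) p.2
    ((hasDerivAt_const p.2 p.1).prodMk (hasDerivAt_id p.2))).deriv

theorem fderiv_eq_zero_of_pdx_eq_zero_of_pdy_eq_zero (hf : DifferentiableAt ℝ f p)
    (hx : pdx f p = 0) (hy : pdy f p = 0) : fderiv ℝ f p = 0 := by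
  ext
  · simpa [pdx_eq_fderiv hf] using hx
  · simpa [pdy_eq_fderiv hf] using hy

theorem pdx_add (hf : DifferentiableAt ℝ f p) (hg : DifferentiableAt ℝ g p) :
    pdx (f + g) p = pdx f p + pdx g p := by
  rw [pdx_eq_fderiv (hf.add hg), pdx_eq_fderiv hf, pdx_eq_fderiv hg, fderiv_add hf hg]
  rfl

theorem pdy_add (hf : DifferentiableAt ℝ f p) (hg : DifferentiableAt ℝ g p) :
    pdy (f + g) p = pdy f p + pdy g p := by
  rw [pdy_eq_fderiv (hf.add hg), pdy_eq_fderiv hf, pdy_eq_fderiv hg, fderiv_add hf hg]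
  rfl

theorem pdx_mul (hf : DifferentiableAt ℝ f p) (hg : DifferentiableAt ℝ g p) :
    pdx (f * g) p = pdx f p * g p + f p * pdx g p := by
  rw [pdx_eq_fderiv (hf.mul hg), pdx_eq_fderiv hf, pdx_eq_fderiv hg, fderiv_mul hf hg]
  simp only [add_apply, smul_apply, smul_eq_mul]
  ring

theorem pdy_mul (hf : DifferentiableAt ℝ f p) (hg : DifferentiableAt ℝ g p) :
    pdy (f * g) p = pdy f p * g p + f p * pdy g p := by
  rw [pdy_eq_fderiv (hf.mul hg), pdy_eq_fderiv hf, pdy_eq_fderiv hg, fderiv_mul hf hg]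
  simp only [add_apply, smul_apply, smul_eq_mul]
  ring

theorem pdx_const_smul (c : ℝ) (f : ℝ × ℝ → ℝ) (p : ℝ × ℝ) : pdx (c • f) p = c * pdx f p :=
  deriv_const_mul_field c

theorem pdy_const_smul (c : ℝ) (f : ℝ × ℝ → ℝ) (p : ℝ × ℝ) : pdy (c • f) p = c * pdy f p :=
  deriv_const_mul_field c

theorem pdx_congr (h : f =ᶠ[𝓝 p] g) : pdx f p = pdx g p :=
  Filter.EventuallyEq.deriv_eq <|
    h.comp_tendsto (Continuous.prodMk_left p.2).continuousAt.tendsto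

theorem pdy_congr (h : f =ᶠ[𝓝 p] g) : pdy f p = pdy g p :=
  Filter.EventuallyEq.deriv_eq <|
    h.comp_tendsto (Continuous.prodMk_right p.1).continuousAt.tendsto

end PartialDerivatives

/-- The space of triples `(ψ₁, ψ₂, ψ₃)` of unknowns of the Liouville system. -/
abbrev FunctionTriple : Type := (ℝ × ℝ → ℝ) × (ℝ × ℝ → ℝ) × (ℝ × ℝ → ℝ)

namespace FunctionTriple

/-- The value `(ψ₁(p), ψ₂(p), ψ₃(p))` at a point, linear in the triple. -/
def eval (p : ℝ × ℝ) : FunctionTriple →ₗ[ℝ] ℝ × ℝ × ℝ :=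
  (LinearMap.proj p).prodMap ((LinearMap.proj p).prodMap (LinearMap.proj p))

/-- Restriction of a triple to `U`. Triples are defined on the whole plane, so linear independence
on `U` is linear independence of the restrictions. -/
def restrict (U : Set (ℝ × ℝ)) : FunctionTriple →ₗ[ℝ] U → ℝ × ℝ × ℝ :=
  LinearMap.pi fun p => eval p

theorem eval_apply (p : ℝ × ℝ) (Ψ : FunctionTriple) : eval p Ψ = (Ψ.1 p, Ψ.2.1 p, Ψ.2.2 p) :=
  rfl

theorem restrict_apply {U : Set (ℝ × ℝ)} (Ψ : FunctionTriple) (p : U) :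
    restrict U Ψ p = eval p Ψ :=
  rfl

end FunctionTriple

open FunctionTriple

theorem linIndepOnU_iff_linearIndependent_restrict {U : Set (ℝ × ℝ)} {d : ℕ}
    {b : Fin d → FunctionTriple} :
    LinIndepOnU U b ↔ LinearIndependent ℝ fun m => restrict U (b m) := by
  simp [LinIndepOnU, Fintype.linearIndependent_iff, funext_iff, restrict_apply, eval_apply,
    Prod.ext_iff, Prod.fst_sum, Prod.snd_sum]

section Solutions

variable {U : Set (ℝ × ℝ)} {A0 A1 A2 A3 : ℝ × ℝ → ℝ}

namespace AnalyticLiouvilleSol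

variable {Ψ Φ : FunctionTriple}

theorem analyticOnNhd_eval (hΨ : AnalyticLiouvilleSol U A0 A1 A2 A3 Ψ) :
    AnalyticOnNhd ℝ (fun q => eval q Ψ) U :=
  hΨ.1.prod (hΨ.2.1.prod hΨ.2.2.1)

theorem add (hΨ : AnalyticLiouvilleSol U A0 A1 A2 A3 Ψ)
    (hΦ : AnalyticLiouvilleSol U A0 A1 A2 A3 Φ) : AnalyticLiouvilleSol U A0 A1 A2 A3 (Ψ + Φ) := by
  obtain ⟨aψ1, aψ2, aψ3, hψ⟩ := hΨ
  obtain ⟨aφ1, aφ2, aφ3, hφ⟩ := hΦ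
  refine ⟨aψ1.add aφ1, aψ2.add aφ2, aψ3.add aφ3, fun p hp => ?_⟩
  obtain ⟨ψx, ψy, ψxy, ψyx⟩ := hψ p hp
  obtain ⟨φx, φy, φxy, φyx⟩ := hφ p hp
  have d1 := And.intro (aψ1 p hp).differentiableAt (aφ1 p hp).differentiableAt
  have d2 := And.intro (aψ2 p hp).differentiableAt (aφ2 p hp).differentiableAt
  have d3 := And.intro (aψ3 p hp).differentiableAt (aφ3 p hp).differentiableAt
  simp only [Prod.fst_add, Prod.snd_add, Pi.add_apply, pdx_add d1.1 d1.2, pdy_add d1.1 d1.2,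
    pdx_add d2.1 d2.2, pdy_add d2.1 d2.2, pdx_add d3.1 d3.2, pdy_add d3.1 d3.2]
  refine ⟨?_, ?_, ?_, ?_⟩
  · linear_combination ψx + φx
  · linear_combination ψy + φy
  · linear_combination ψxy + φxy
  · linear_combination ψyx + φyx

theorem const_smul (hΨ : AnalyticLiouvilleSol U A0 A1 A2 A3 Ψ) (c : ℝ) :
    AnalyticLiouvilleSol U A0 A1 A2 A3 (c • Ψ) := by
  obtain ⟨a1, a2, a3, hψ⟩ := hΨ
  refine ⟨a1.const_smul, a2.const_smul, a3.const_smul, fun p hp => ?_⟩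
  obtain ⟨ψx, ψy, ψxy, ψyx⟩ := hψ p hp
  simp only [Prod.smul_fst, Prod.smul_snd, Pi.smul_apply, smul_eq_mul, pdx_const_smul,
    pdy_const_smul]
  refine ⟨?_, ?_, ?_, ?_⟩
  · linear_combination c * ψx
  · linear_combination c * ψy
  · linear_combination c * ψxy
  · linear_combination c * ψyx

theorem restrict_eq_of_eventuallyEq (hU : IsPreconnected U)
    (hΨ : AnalyticLiouvilleSol U A0 A1 A2 A3 Ψ) (hΦ : AnalyticLiouvilleSol U A0 A1 A2 A3 Φ)
    {p : ℝ × ℝ} (hp : p ∈ U) (h : ∀ᶠ q in 𝓝 p, eval q Ψ = eval q Φ) :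
    restrict U Ψ = restrict U Φ :=
  funext fun q => hΨ.analyticOnNhd_eval.eqOn_of_preconnected_of_eventuallyEq
    hΦ.analyticOnNhd_eval hU hp h q.2

end AnalyticLiouvilleSol

/-- The four equations are the principal symbol of the Liouville system at the covector `(ξ, η)`,
applied to `u`. -/
theorem eq_zero_of_liouville_symbol_eq_zero {ξ η : ℝ} {u : ℝ × ℝ × ℝ} (hu : u ≠ 0)
    (hx : ξ * u.1 = 0) (hy : η * u.2.2 = 0) (hxy : η * u.1 + 2 * (ξ * u.2.1) = 0)
    (hyx : ξ * u.2.2 + 2 * (η * u.2.1) = 0) : ξ = 0 ∧ η = 0 := by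
  by_cases ha : u.1 = 0 <;> by_cases hc : u.2.2 = 0 <;> simp_all [Prod.ext_iff]

theorem fderiv_eq_zero_of_eval_eventuallyEq_smul {Ψ Φ : FunctionTriple} {f : ℝ × ℝ → ℝ} {p : ℝ × ℝ}
    (hp : p ∈ U) (hΨ : LiouvilleSystem U A0 A1 A2 A3 Ψ.1 Ψ.2.1 Ψ.2.2)
    (hΦ : LiouvilleSystem U A0 A1 A2 A3 Φ.1 Φ.2.1 Φ.2.2) (hf : DifferentiableAt ℝ f p)
    (hdΨ : DifferentiableAt ℝ (fun q => eval q Ψ) p) (hΨp : eval p Ψ ≠ 0)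
    (hfΨ : ∀ᶠ q in 𝓝 p, eval q Φ = f q • eval q Ψ) : fderiv ℝ f p = 0 := by
  obtain ⟨ψ1, ψ2, ψ3⟩ := Ψ
  obtain ⟨φ1, φ2, φ3⟩ := Φ
  have d1 : DifferentiableAt ℝ ψ1 p := hdΨ.fst
  have d2 : DifferentiableAt ℝ ψ2 p := hdΨ.snd.fst
  have d3 : DifferentiableAt ℝ ψ3 p := hdΨ.snd.snd
  have e1 : φ1 =ᶠ[𝓝 p] f * ψ1 := hfΨ.mono fun q hq => congrArg (·.1) hq
  have e2 : φ2 =ᶠ[𝓝 p] f * ψ2 := hfΨ.mono fun q hq => congrArg (·.2.1) hq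
  have e3 : φ3 =ᶠ[𝓝 p] f * ψ3 := hfΨ.mono fun q hq => congrArg (·.2.2) hq
  obtain ⟨ψx, ψy, ψxy, ψyx⟩ := hΨ p hp
  obtain ⟨φx, φy, φxy, φyx⟩ := hΦ p hp
  simp only [e1.eq_of_nhds, e2.eq_of_nhds, e3.eq_of_nhds, Pi.mul_apply, pdx_congr e1, pdy_congr e1,
    pdx_congr e2, pdy_congr e2, pdx_congr e3, pdy_congr e3, pdx_mul hf d1, pdy_mul hf d1,
    pdx_mul hf d2, pdy_mul hf d2, pdx_mul hf d3, pdy_mul hf d3] at φx φy φxy φyx ψx ψy ψxy ψyx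
  obtain ⟨hfx, hfy⟩ : pdx f p = 0 ∧ pdy f p = 0 := by
    apply eq_zero_of_liouville_symbol_eq_zero hΨp <;> simp only [eval_apply]
    · linear_combination φx - f p * ψx
    · linear_combination φy - f p * ψy
    · linear_combination φxy - f p * ψxy
    · linear_combination φyx - f p * ψyx
  exact fderiv_eq_zero_of_pdx_eq_zero_of_pdy_eq_zero hf hfx hfy

namespace AnalyticLiouvilleSol

variable {Ψ Φ : FunctionTriple}

theorem exists_eventuallyEq_const_smul (hU : IsOpen U) (hΨ : AnalyticLiouvilleSol U A0 A1 A2 A3 Ψ)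
    (hΦ : AnalyticLiouvilleSol U A0 A1 A2 A3 Φ) {p : ℝ × ℝ} (hp : p ∈ U) (hΨp : eval p Ψ ≠ 0)
    (hprop : ∀ᶠ q in 𝓝 p, ∃ c : ℝ, eval q Φ = c • eval q Ψ) :
    ∃ c : ℝ, ∀ᶠ q in 𝓝 p, eval q Φ = c • eval q Ψ := by
  obtain ⟨f, hf, hfΨ⟩ := exists_analyticAt_eventuallyEq_smul (hΨ.analyticOnNhd_eval p hp)
    (hΦ.analyticOnNhd_eval p hp) hΨp hprop
  have hfd : ∀ᶠ q in 𝓝 p, DifferentiableAt ℝ f q :=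
    hf.eventually_analyticAt.mono fun q hq => hq.differentiableAt
  have hΨne : ∀ᶠ q in 𝓝 p, eval q Ψ ≠ 0 :=
    (hΨ.analyticOnNhd_eval p hp).continuousAt.eventually_ne hΨp
  have hf' : ∀ᶠ q in 𝓝 p, fderiv ℝ f q = 0 := by
    filter_upwards [hU.mem_nhds hp, hfd, hΨne, hfΨ.eventually_nhds] with q hq hfq hΨq hfΨq
    exact fderiv_eq_zero_of_eval_eventuallyEq_smul hq hΨ.2.2.2 hΦ.2.2.2 hfq
      (hΨ.analyticOnNhd_eval q hq).differentiableAt hΨq hfΨq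
  refine ⟨f p, ?_⟩
  filter_upwards [hfΨ, eventually_eq_of_eventually_fderiv_eq_zero hfd hf'] with q hq hfq
  rw [hq, hfq]

theorem exists_restrict_eq_smul (hU : IsOpen U) (hUc : IsPreconnected U)
    (hΨ : AnalyticLiouvilleSol U A0 A1 A2 A3 Ψ) (hΦ : AnalyticLiouvilleSol U A0 A1 A2 A3 Φ)
    (hΨ0 : restrict U Ψ ≠ 0)
    (hprop : ∀ q ∈ U, eval q Ψ ≠ 0 → ∃ c : ℝ, eval q Φ = c • eval q Ψ) :
    ∃ c : ℝ, restrict U Φ = c • restrict U Ψ := by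
  obtain ⟨⟨p, hp⟩, hΨp⟩ := Function.ne_iff.1 hΨ0
  have hΨne : ∀ᶠ q in 𝓝 p, eval q Ψ ≠ 0 :=
    (hΨ.analyticOnNhd_eval p hp).continuousAt.eventually_ne hΨp
  obtain ⟨c, hc⟩ := exists_eventuallyEq_const_smul hU hΨ hΦ hp hΨp <| by
    filter_upwards [hU.mem_nhds hp, hΨne] using hprop
  refine ⟨c, ?_⟩
  rw [← map_smul]
  exact hΦ.restrict_eq_of_eventuallyEq hUc (hΨ.const_smul c) hp (by simpa only [map_smul] using hc)

theorem exists_binaryFormDet_ne_zero (hU : IsOpen U) (hUc : IsPreconnected U)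
    (hΨ : AnalyticLiouvilleSol U A0 A1 A2 A3 Ψ) (hΦ : AnalyticLiouvilleSol U A0 A1 A2 A3 Φ)
    (hind : LinearIndependent ℝ ![restrict U Ψ, restrict U Φ]) :
    ∃ X, AnalyticLiouvilleSol U A0 A1 A2 A3 X ∧ ∃ q ∈ U, binaryFormDet ℝ (eval q X) ≠ 0 := by
  by_contra! hdet
  have hΨ0 : restrict U Ψ ≠ 0 := hind.ne_zero 0
  obtain ⟨c, hc⟩ := exists_restrict_eq_smul hU hUc hΨ hΦ hΨ0 fun q hq hΨq =>
    exists_eq_smul_of_binaryFormDet_eq_zero hΨq (hdet Ψ hΨ q hq) (hdet Φ hΦ q hq)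
      (by simpa only [map_add] using hdet (Ψ + Φ) (hΨ.add hΦ) q hq)
  exact (LinearIndependent.pair_iff' hΨ0).1 hind c hc.symm

end AnalyticLiouvilleSol

end Solutions

theorem independent_nondegenerate_solutions_general {U : Set (ℝ × ℝ)} (hU : IsOpen U)
    (hUc : IsPreconnected U) {A0 A1 A2 A3 : ℝ × ℝ → ℝ} {ι : Type*} [Finite ι] [Nontrivial ι]
    {b : ι → FunctionTriple} (hb : ∀ m, AnalyticLiouvilleSol U A0 A1 A2 A3 (b m))
    (hind : LinearIndependent ℝ fun m => restrict U (b m)) :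
    ∃ b' : ι → FunctionTriple, (∀ m, AnalyticLiouvilleSol U A0 A1 A2 A3 (b' m)) ∧
      (LinearIndependent ℝ fun m => restrict U (b' m)) ∧
      ∃ q ∈ U, ∀ m, binaryFormDet ℝ (eval q (b' m)) ≠ 0 := by
  obtain ⟨i, j, hij⟩ := exists_pair_ne ι
  have hpair : LinearIndependent ℝ ![restrict U (b i), restrict U (b j)] := by
    convert hind.comp ![i, j] (injective_pair_iff_ne.2 hij) using 1
    exact funext (Fin.forall_fin_two.2 ⟨rfl, rfl⟩)
  obtain ⟨X, hX, q, hq, hXq⟩ := (hb i).exists_binaryFormDet_ne_zero hU hUc (hb j) hpair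
  let Q : QuadraticForm ℝ (U → ℝ × ℝ × ℝ) :=
    (binaryFormDet ℝ).comp (LinearMap.proj (⟨q, hq⟩ : U))
  have hQX : Q (restrict U X) ≠ 0 := hXq
  obtain ⟨t, htind, ht⟩ :=
    exists_linearIndependent_add_smul_and_quadraticForm_ne_zero Q hQX hind
  refine ⟨fun m => b m + t • X, fun m => (hb m).add (hX.const_smul t), ?_, q, hq, fun m => ?_⟩
  · simpa only [map_add, map_smul] using htind
  · simpa only [map_add, map_smul] using! ht m

/-- If the space of real-analytic solutions of the Liouville system has dimension
`d ≥ 2`, then it contains `d` linearly independent solutions each of which is a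
nondegenerate quadratic form at some point of `U`. -/
theorem independent_nondegenerate_solutions (U : Set (ℝ × ℝ)) (hU : IsOpen U)
    (hUconn : IsConnected U)
    (A0 A1 A2 A3 : ℝ × ℝ → ℝ)
    (hA0 : AnalyticOnNhd ℝ A0 U) (hA1 : AnalyticOnNhd ℝ A1 U)
    (hA2 : AnalyticOnNhd ℝ A2 U) (hA3 : AnalyticOnNhd ℝ A3 U)
    (d : ℕ) (hd : 2 ≤ d)
    (b : Fin d → (ℝ × ℝ → ℝ) × (ℝ × ℝ → ℝ) × (ℝ × ℝ → ℝ))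
    (hb : ∀ m, AnalyticLiouvilleSol U A0 A1 A2 A3 (b m))
    (hbind : LinIndepOnU U b) :
    ∃ b' : Fin d → (ℝ × ℝ → ℝ) × (ℝ × ℝ → ℝ) × (ℝ × ℝ → ℝ),
      (∀ m, AnalyticLiouvilleSol U A0 A1 A2 A3 (b' m)) ∧
      LinIndepOnU U b' ∧
      ∀ m, ∃ q ∈ U, (b' m).1 q * (b' m).2.2 q - ((b' m).2.1 q) ^ 2 ≠ 0 := by
  have : Nontrivial (Fin d) := Fin.nontrivial_iff_two_le.2 hd
  obtain ⟨b', hsol, hind, q, hq, hdet⟩ := independent_nondegenerate_solutions_general hU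
    hUconn.isPreconnected hb (linIndepOnU_iff_linearIndependent_restrict.1 hbind)
  exact ⟨b', hsol, linIndepOnU_iff_linearIndependent_restrict.2 hind,
    fun m => ⟨q, hq, by simpa only [binaryFormDet_apply, eval_apply] using hdet m⟩⟩
end

section
/- (Liouville–Tresse trivialisability theorem, cubic case) Consider the second-order ODE y'' = A₃(y')³ + A₂(y')² + A₁y' + A₀ with A₀, A₁, A₂, A₃ smooth on U. Then L₁ and L₂ vanish identically on U if and only if for every p ∈ U there exist a neighbourhood U' of p and a diffeomorphism Φ from U' onto an open subset of ℝ² such that for every solution y(·) of the ODE whose graph lies in U', the image under Φ of the graph of y is contained in an affine line of ℝ² (equivalently, the ODE is locally equivalent to ȳ'' = 0 under a point transformation (x,y) ↦ (x̄(x,y), ȳ(x,y))). -/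
noncomputable section

/-- Liouville's first projective invariant `L₁`. -/
def Lio1 (A0 A1 A2 A3 : ℝ × ℝ → ℝ) : ℝ × ℝ → ℝ := fun p =>
  (2/3) * pdx (pdy A1) p - (1/3) * pdx (pdx A2) p - pdy (pdy A0) p
    + A0 p * pdy A2 p + A2 p * pdy A0 p - A3 p * pdx A0 p - 2 * A0 p * pdx A3 p
    - (2/3) * A1 p * pdy A1 p + (1/3) * A1 p * pdx A2 p

/-- Liouville's second projective invariant `L₂`. -/
def Lio2 (A0 A1 A2 A3 : ℝ × ℝ → ℝ) : ℝ × ℝ → ℝ := fun p =>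
  (2/3) * pdx (pdy A2) p - (1/3) * pdy (pdy A1) p - pdx (pdx A3) p
    - A3 p * pdx A1 p - A1 p * pdx A3 p + A0 p * pdy A3 p + 2 * A3 p * pdy A0 p
    + (2/3) * A2 p * pdx A2 p - (1/3) * A2 p * pdy A1 p

/-- The row vector `V = (V₁,…,V₆)`. -/
def Vrow (A0 A1 A2 A3 : ℝ × ℝ → ℝ) : ℝ × ℝ → Fin 6 → ℝ := fun p =>
  ![2 * pdy (Lio2 A0 A1 A2 A3) p + 4 * A2 p * Lio2 A0 A1 A2 A3 p
      + 8 * A3 p * Lio1 A0 A1 A2 A3 p,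
    -2 * pdy (Lio1 A0 A1 A2 A3) p - 2 * pdx (Lio2 A0 A1 A2 A3) p
      - (4/3) * A1 p * Lio2 A0 A1 A2 A3 p + (4/3) * A2 p * Lio1 A0 A1 A2 A3 p,
    2 * pdx (Lio1 A0 A1 A2 A3) p - 8 * A0 p * Lio2 A0 A1 A2 A3 p
      - 4 * A1 p * Lio1 A0 A1 A2 A3 p,
    -5 * Lio2 A0 A1 A2 A3 p,
    -5 * Lio1 A0 A1 A2 A3 p,
    0]


end

/-- `y` is a solution of `y'' = A₃(y')³ + A₂(y')² + A₁y' + A₀` on the open interval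
`Ioo a b`, with graph contained in `V`. -/
def IsODESolution (V : Set (ℝ × ℝ)) (A0 A1 A2 A3 : ℝ × ℝ → ℝ)
    (y : ℝ → ℝ) (a b : ℝ) : Prop :=
  ∀ x ∈ Set.Ioo a b,
    (x, y x) ∈ V ∧
    DifferentiableAt ℝ y x ∧
    DifferentiableAt ℝ (deriv y) x ∧
    deriv (deriv y) x =
      A3 (x, y x) * (deriv y x) ^ 3 + A2 (x, y x) * (deriv y x) ^ 2
        + A1 (x, y x) * deriv y x + A0 (x, y x)

/-!
The cubic equation describes the unparametrised geodesics of a projective structure on the plane,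
whose tractor connection, written on `1`-jets `(f, fₓ, f_y)`, has curvature with only the entries
`-L₁` and `-L₂`. If both vanish, the connection has three independent parallel sections near every
point. Along a solution, the leading component of a parallel section satisfies a scalar linear
second order equation, so the three leading components satisfy a linear relation there: they are
homogeneous coordinates in which the solutions are straight lines.

Conversely, if `(u, v)` straightens all solutions, then `u' v'' - v' u''`, a cubic polynomial in the
slope, vanishes identically. Its coefficients say that `u` and `v` have zero Hessian for a torsion
free connection representing the projective structure; as `du` and `dv` are independent, that
connection is flat, and differentiating the flatness equations once more yields `L₁ = L₂ = 0`.
-/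

open Set Filter Metric TopologicalSpace
open scoped Topology ContDiff

section ParallelSections

set_option maxSynthPendingDepth 3

variable {E F G : Type*} [NormedAddCommGroup E] [NormedSpace ℝ E]
  [NormedAddCommGroup F] [NormedSpace ℝ F] [NormedAddCommGroup G] [NormedSpace ℝ G]

/-- The sections `X` of the trivial bundle with fibre `E` which are parallel on `V` for the
connection `d - A`: the total differential equation `dX = A X` holds at every point of `V`. -/
def IsParallelOn (A : F → F →L[ℝ] E →L[ℝ] E) (X : F → E) (V : Set F) : Prop :=
  ∀ q ∈ V, HasFDerivAt X ((A q).flip (X q)) q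

/-- Vanishing at `q` of the curvature of the connection `d - A`. -/
def IsFlatAt (A : F → F →L[ℝ] E →L[ℝ] E) (q : F) : Prop :=
  ∀ u v, fderiv ℝ A q u v + A q v ∘L A q u = fderiv ℝ A q v u + A q u ∘L A q v

lemma IsParallelOn.mono {A : F → F →L[ℝ] E →L[ℝ] E} {X : F → E} {V W : Set F}
    (hX : IsParallelOn A X V) (h : W ⊆ V) : IsParallelOn A X W :=
  fun q hq => hX q (h hq)

lemma IsParallelOn.sum_smul {ι : Type*} [Fintype ι] {A : F → F →L[ℝ] E →L[ℝ] E} {X : ι → F → E}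
    {V : Set F} (hX : ∀ i, IsParallelOn A (X i) V) (c : ι → ℝ) :
    IsParallelOn A (fun q => ∑ i, c i • X i q) V := by
  intro q hq
  simp only [map_sum, map_smul]
  exact HasFDerivAt.fun_sum fun i _ => (hX i q hq).const_smul (c i)

lemma IsParallelOn.contDiffOn {A : F → F →L[ℝ] E →L[ℝ] E} {X : F → E} {V : Set F} (hV : IsOpen V)
    (hA : ContDiffOn ℝ ∞ A V) (hX : IsParallelOn A X V) : ContDiffOn ℝ ∞ X V := by
  have hdiff : DifferentiableOn ℝ X V :=
    fun q hq => (hX q hq).differentiableAt.differentiableWithinAt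
  rw [contDiffOn_infty]
  intro n
  induction n with
  | zero => exact contDiffOn_zero.2 hdiff.continuousOn
  | succ n ih =>
    push_cast
    refine (contDiffOn_succ_iff_fderiv_of_isOpen hV).2 ⟨hdiff, by simp, ?_⟩
    have hflip : ContDiffOn ℝ n (fun q => (A q).flip) V :=
      (ContinuousLinearMap.flipₗᵢ ℝ F E E).contDiff.comp_contDiffOn (contDiffOn_infty.1 hA n)
    exact (hflip.clm_apply ih).congr fun q hq => (hX q hq).fderiv

lemma exists_taylor_bound {f : F → G} {p : F} (hf : ContDiffAt ℝ 2 f p) :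
    ∃ C : ℝ, 0 ≤ C ∧ ∀ᶠ r in 𝓝[>] (0 : ℝ), ∀ x ∈ ball p r, DifferentiableAt ℝ f x ∧ ‖f x‖ ≤ C ∧
      ‖fderiv ℝ f x‖ ≤ C ∧
      ∀ y ∈ ball p r, ‖f y - f x - fderiv ℝ f x (y - x)‖ ≤ C * ‖y - x‖ ^ 2 := by
  have hdf : ContDiffAt ℝ 1 (fderiv ℝ f) p := hf.fderiv_right (by norm_num)
  obtain ⟨K, s, hs, hK⟩ := hdf.exists_lipschitzOnWith
  set C : ℝ := max K (max (‖f p‖ + 1) (‖fderiv ℝ f p‖ + 1))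
  have hKC : (K : ℝ) ≤ C := le_max_left _ _
  have hfC : ‖f p‖ < C := (lt_add_one _).trans_le <| (le_max_left _ _).trans (le_max_right _ _)
  have hdfC : ‖fderiv ℝ f p‖ < C :=
    (lt_add_one _).trans_le <| (le_max_right _ _).trans (le_max_right _ _)
  have hev : ∀ᶠ x in 𝓝 p, DifferentiableAt ℝ f x ∧ ‖f x‖ < C ∧ ‖fderiv ℝ f x‖ < C ∧ x ∈ s := by
    filter_upwards [hf.eventually (by simp), hf.continuousAt.norm.eventually_lt_const hfC,
      hdf.continuousAt.norm.eventually_lt_const hdfC, hs] with x h₁ h₂ h₃ h₄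
    exact ⟨h₁.differentiableAt (by simp), h₂, h₃, h₄⟩
  obtain ⟨R, hR, hball⟩ := Metric.eventually_nhds_iff_ball.1 hev
  refine ⟨C, (norm_nonneg _).trans hfC.le, ?_⟩
  filter_upwards [Ioc_mem_nhdsGT hR] with r hr x hx
  have hsub : ball p r ⊆ ball p R := ball_subset_ball hr.2
  obtain ⟨hfx, hnx, hdx, hxs⟩ := hball x (hsub hx)
  refine ⟨hfx, hnx.le, hdx.le, fun y hy => ?_⟩
  have hseg : segment ℝ x y ⊆ ball p R := ((convex_ball p r).segment_subset hx hy).trans hsub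
  have hmean := (convex_segment x y).norm_image_sub_le_of_norm_fderiv_le' (𝕜 := ℝ) (f := f)
    (φ := fderiv ℝ f x) (C := C * ‖y - x‖) (fun z hz => (hball z (hseg hz)).1)
    (fun z hz => ?_) (left_mem_segment ℝ x y) (right_mem_segment ℝ x y)
  · rwa [sq, ← mul_assoc]
  · calc ‖fderiv ℝ f z - fderiv ℝ f x‖ ≤ K * ‖z - x‖ :=
          hK.norm_sub_le (hball z (hseg hz)).2.2.2 hxs
      _ ≤ C * ‖y - x‖ := by
          gcongr
          exact norm_sub_le_of_mem_segment hz

lemma exists_hasDerivWithinAt_linear [CompleteSpace E] {B : ℝ → E →L[ℝ] E}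
    (hB : ContinuousOn B (Icc 0 1)) (hb : ∀ t ∈ Icc (0 : ℝ) 1, ‖B t‖ ≤ 1 / 2) (e : E) :
    ∃ α : ℝ → E, α 0 = e ∧
      ∀ t ∈ Icc (0 : ℝ) 1, HasDerivWithinAt α (B t (α t)) (Icc 0 1) t := by
  have hPL : IsPicardLindelof (fun t => B t) (⟨0, by simp⟩ : Icc (0 : ℝ) 1) e
      (‖e‖₊ + 1) 0 ((2 * ‖e‖₊ + 1) / 2) (1 / 2) :=
    { lipschitzOnWith := fun t ht =>
        ((B t).lipschitz.weaken (by exact_mod_cast hb t ht)).lipschitzOnWith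
      continuousOn := fun x _ => hB.clm_apply continuousOn_const
      norm_le := fun t ht x hx => by
        have hx' : ‖x‖ ≤ 2 * ‖e‖ + 1 := by
          have := norm_le_norm_add_norm_sub' x e
          rw [mem_closedBall_iff_norm] at hx
          push_cast at hx
          linarith
        calc ‖B t x‖ ≤ 1 / 2 * (2 * ‖e‖ + 1) := (B t).le_of_opNorm_le_of_le (hb t ht) hx'
          _ = _ := by push_cast; ring
      mul_max_le := by
        push_cast
        norm_num
        linarith [norm_nonneg e] }
  exact hPL.exists_eq_forall_mem_Icc_hasDerivWithinAt₀

lemma norm_curvature_remainder_le {A : F → F →L[ℝ] E →L[ℝ] E} {C : ℝ} {x k h η : F}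
    (hflat : IsFlatAt A x) (hx : ‖A x‖ ≤ C) (hdx : ‖fderiv ℝ A x‖ ≤ C)
    (htaylor : ‖A (x + η) - A x - fderiv ℝ A x η‖ ≤ C * ‖η‖ ^ 2) (hη : ‖η‖ ≤ ‖h‖)
    (hη₁ : ‖η‖ ≤ 1) (hkh : ‖k + h‖ ≤ 1) :
    ‖A x (k + h) + fderiv ℝ A x k η + A x η ∘L A x k - A (x + η) (k + h)
      - A (x + η) (k + h) ∘L A x η‖ ≤ (2 * C + 3 * C ^ 2) * ‖h‖ ^ 2 := by
  have hC : 0 ≤ C := (norm_nonneg _).trans hx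
  set T := A (x + η) - A x - fderiv ℝ A x η with hT
  have hA : A (x + η) = A x + fderiv ℝ A x η + T := by rw [hT]; abel
  have hTh : ‖T (k + h)‖ ≤ C * ‖h‖ ^ 2 :=
    calc ‖T (k + h)‖ ≤ C * ‖η‖ ^ 2 * 1 := T.le_of_opNorm_le_of_le htaylor hkh
      _ ≤ C * ‖h‖ ^ 2 := by rw [mul_one]; gcongr
  have hDη : ‖fderiv ℝ A x η‖ ≤ C * ‖h‖ := (fderiv ℝ A x).le_of_opNorm_le_of_le hdx hη
  have hDh : ‖fderiv ℝ A x η h‖ ≤ C * ‖h‖ ^ 2 :=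
    calc ‖fderiv ℝ A x η h‖ ≤ C * ‖h‖ * ‖h‖ := (fderiv ℝ A x η).le_of_opNorm_le hDη h
      _ = C * ‖h‖ ^ 2 := by ring
  have hAη : ‖A x η‖ ≤ C * ‖h‖ := (A x).le_of_opNorm_le_of_le hx hη
  have hincr : ‖(fderiv ℝ A x η + T) (k + h)‖ ≤ 2 * C * ‖h‖ :=
    calc ‖(fderiv ℝ A x η + T) (k + h)‖
        ≤ (C * ‖h‖ + C * ‖h‖ * 1) * 1 := by
          refine ContinuousLinearMap.le_of_opNorm_le_of_le _ (norm_add_le_of_le hDη ?_) hkh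
          calc ‖T‖ ≤ C * ‖η‖ * ‖η‖ := by rwa [mul_assoc, ← sq]
            _ ≤ C * ‖h‖ * 1 := by gcongr
      _ = 2 * C * ‖h‖ := by ring
  have hAh : ‖A x h‖ ≤ C * ‖h‖ := (A x).le_of_opNorm_le hx h
  have hcurv : A x (k + h) + fderiv ℝ A x k η + A x η ∘L A x k - A (x + η) (k + h)
      - A (x + η) (k + h) ∘L A x η
      = -(T (k + h) + fderiv ℝ A x η h
          + (A x h + (fderiv ℝ A x η + T) (k + h)) ∘L A x η) := by
    rw [add_assoc (A x (k + h)), hflat k η, hA]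
    simp only [map_add, add_apply, ContinuousLinearMap.add_comp]
    abel
  rw [hcurv, norm_neg]
  calc _ ≤ C * ‖h‖ ^ 2 + C * ‖h‖ ^ 2 + (C * ‖h‖ + 2 * C * ‖h‖) * (C * ‖h‖) := by
        refine norm_add_le_of_le (norm_add_le_of_le hTh hDh) ?_
        refine (ContinuousLinearMap.opNorm_comp_le _ _).trans ?_
        gcongr
        exact norm_add_le_of_le hAh hincr
    _ = (2 * C + 3 * C ^ 2) * ‖h‖ ^ 2 := by ring

/-- `α` is the parallel transport of `e` along the segment `t ↦ p + t • k`, `0 ≤ t ≤ 1`, for the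
connection `d - A`. -/
def IsTransport (A : F → F →L[ℝ] E →L[ℝ] E) (p k : F) (e : E) (α : ℝ → E) : Prop :=
  α 0 = e ∧ ∀ t ∈ Icc (0 : ℝ) 1, HasDerivWithinAt α (A (p + t • k) k (α t)) (Icc 0 1) t

lemma hasDerivWithinAt_transport_defect {A : F → F →L[ℝ] E →L[ℝ] E} {p k h : F} {α β : ℝ → E}
    {s : Set ℝ} {t : ℝ} (hA : DifferentiableAt ℝ A (p + t • k))
    (hβ : HasDerivWithinAt β (A (p + t • k) k (β t)) s t)
    (hα : HasDerivWithinAt α (A (p + t • k + t • h) (k + h) (α t)) s t) :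
    HasDerivWithinAt (fun τ => β τ + A (p + τ • k) (τ • h) (β τ) - α τ)
      (A (p + t • k + t • h) (k + h) (β t + A (p + t • k) (t • h) (β t) - α t)
        + (A (p + t • k) (k + h) + fderiv ℝ A (p + t • k) k (t • h)
            + A (p + t • k) (t • h) ∘L A (p + t • k) k - A (p + t • k + t • h) (k + h)
            - A (p + t • k + t • h) (k + h) ∘L A (p + t • k) (t • h)) (β t)) s t := by
  have hray : HasDerivWithinAt (fun τ : ℝ => p + τ • k) k s t := by
    simpa using ((hasDerivWithinAt_id t s).smul_const k).const_add p
  have hη : HasDerivWithinAt (fun τ : ℝ => τ • h) h s t := by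
    simpa using (hasDerivWithinAt_id t s).smul_const h
  have hAray := hA.hasFDerivAt.comp_hasDerivWithinAt t hray
  refine ((hβ.add ((hAray.clm_apply hη).clm_apply hβ)).sub hα).congr_deriv ?_
  simp only [Function.comp_apply, map_add, map_sub, add_apply, sub_apply,
    ContinuousLinearMap.comp_apply]
  abel

lemma IsTransport.norm_sub_le {A : F → F →L[ℝ] E →L[ℝ] E} {p k h : F} {e : E} {α β : ℝ → E}
    {ε M : ℝ} (hβ : IsTransport A p k e β) (hα : IsTransport A p (k + h) e α)
    (hA : ∀ t ∈ Icc (0 : ℝ) 1, DifferentiableAt ℝ A (p + t • k))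
    (hA₁ : ∀ t ∈ Icc (0 : ℝ) 1, ‖A (p + t • k + t • h) (k + h)‖ ≤ 1)
    (hM : ∀ t ∈ Icc (0 : ℝ) 1, ‖β t‖ ≤ M)
    (hε : ∀ t ∈ Icc (0 : ℝ) 1, ‖A (p + t • k) (k + h) + fderiv ℝ A (p + t • k) k (t • h)
      + A (p + t • k) (t • h) ∘L A (p + t • k) k - A (p + t • k + t • h) (k + h)
      - A (p + t • k + t • h) (k + h) ∘L A (p + t • k) (t • h)‖ ≤ ε) :
    ‖α 1 - β 1 - A (p + k) h (β 1)‖ ≤ gronwallBound 0 1 (ε * M) 1 := by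
  have hderiv := fun t ht => hasDerivWithinAt_transport_defect (hA t ht) (hβ.2 t ht)
    (by simpa only [smul_add, add_assoc] using hα.2 t ht)
  have hgron := norm_le_gronwallBound_of_norm_deriv_right_le (δ := 0) (K := 1) (ε := ε * M)
    (fun t ht => (hderiv t ht).continuousWithinAt)
    (fun t ht => (hderiv t (Ico_subset_Icc_self ht)).mono_of_mem_nhdsWithin
      (Icc_mem_nhdsGE_of_mem ht))
    (by simp [hα.1, hβ.1])
    (fun t ht => norm_add_le_of_le
      (ContinuousLinearMap.le_of_opNorm_le _ (hA₁ t (Ico_subset_Icc_self ht)) _)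
      (ContinuousLinearMap.le_of_opNorm_le_of_le _ (hε t (Ico_subset_Icc_self ht))
        (hM t (Ico_subset_Icc_self ht))))
    1 (right_mem_Icc.2 zero_le_one)
  rw [← norm_neg]
  simpa only [one_smul, sub_zero, neg_sub, sub_sub_eq_add_sub, add_comm, sub_sub] using hgron

lemma exists_isTransport [CompleteSpace E] {A : F → F →L[ℝ] E →L[ℝ] E} {p k : F}
    (hA : ContinuousOn A (segment ℝ p (p + k)))
    (hA₁ : ∀ x ∈ segment ℝ p (p + k), ‖A x k‖ ≤ 1 / 2) (e : E) :
    ∃ α, IsTransport A p k e α := by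
  have hmem : ∀ t ∈ Icc (0 : ℝ) 1, p + t • k ∈ segment ℝ p (p + k) := fun t ht => by
    rw [segment_eq_image']
    exact ⟨t, ht, by simp⟩
  refine exists_hasDerivWithinAt_linear (B := fun t => A (p + t • k) k) ?_
    (fun t ht => hA₁ _ (hmem t ht)) e
  exact (hA.comp (by fun_prop) hmem).clm_apply continuousOn_const

lemma IsTransport.apply_one_of_zero {A : F → F →L[ℝ] E →L[ℝ] E} {p : F} {e : E} {α : ℝ → E}
    (hα : IsTransport A p 0 e α) : α 1 = e := by
  rw [← hα.1]
  refine constant_of_has_deriv_right_zero (fun t ht => (hα.2 t ht).continuousWithinAt)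
    (fun t ht => ?_) 1 (right_mem_Icc.2 zero_le_one)
  simpa using (hα.2 t (Ico_subset_Icc_self ht)).mono_of_mem_nhdsWithin (Icc_mem_nhdsGE_of_mem ht)

/-- `d - A` is flat on the ball of radius `r` about `p`, `C` bounds the second order Taylor data of
`A` there, and `r` is so small that transport along the radii is governed by a contraction. -/
structure IsFlatOnBall (A : F → F →L[ℝ] E →L[ℝ] E) (p : F) (r C : ℝ) : Prop where
  le_one : r ≤ 1
  mul_le_half : C * r ≤ 1 / 2
  isFlatAt : ∀ x ∈ ball p r, IsFlatAt A x
  differentiableAt : ∀ x ∈ ball p r, DifferentiableAt ℝ A x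
  norm_le : ∀ x ∈ ball p r, ‖A x‖ ≤ C
  norm_fderiv_le : ∀ x ∈ ball p r, ‖fderiv ℝ A x‖ ≤ C
  taylor_le : ∀ x ∈ ball p r, ∀ y ∈ ball p r,
    ‖A y - A x - fderiv ℝ A x (y - x)‖ ≤ C * ‖y - x‖ ^ 2

lemma exists_isFlatOnBall {A : F → F →L[ℝ] E →L[ℝ] E} {p : F} (hA : ContDiffAt ℝ 2 A p)
    (hflat : ∀ᶠ q in 𝓝 p, IsFlatAt A q) : ∃ r > 0, ∃ C, IsFlatOnBall A p r C := by
  obtain ⟨C, hC, hbound⟩ := exists_taylor_bound hA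
  obtain ⟨R, hR, hflat⟩ := Metric.eventually_nhds_iff_ball.1 hflat
  have hpos : 0 < min R (min 1 (1 / (2 * (C + 1)))) := by positivity
  obtain ⟨r, hbound, hr, hle⟩ := (hbound.and (Ioc_mem_nhdsGT hpos)).exists
  simp only [le_min_iff] at hle
  refine ⟨r, hr, C, hle.2.1, ?_, fun x hx => hflat x (ball_subset_ball hle.1 hx),
    fun x hx => (hbound x hx).1, fun x hx => (hbound x hx).2.1,
    fun x hx => (hbound x hx).2.2.1, fun x hx => (hbound x hx).2.2.2⟩
  calc C * r ≤ C * (1 / (2 * (C + 1))) := by gcongr; exact hle.2.2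
    _ ≤ 1 / 2 := by
      rw [mul_one_div, div_le_div_iff₀ (by positivity) two_pos]
      linarith

namespace IsFlatOnBall

variable {A : F → F →L[ℝ] E →L[ℝ] E} {p k h : F} {r C : ℝ}

lemma norm_apply_le_half (hA : IsFlatOnBall A p r C) {x : F} (hx : x ∈ ball p r) (hk : ‖k‖ ≤ r) :
    ‖A x k‖ ≤ 1 / 2 :=
  ((A x).le_of_opNorm_le_of_le (hA.norm_le x hx) hk).trans hA.mul_le_half

lemma exists_isTransport [CompleteSpace E] (hA : IsFlatOnBall A p r C) (hk : ‖k‖ < r) (e : E) :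
    ∃ α, IsTransport A p k e α := by
  have hseg : segment ℝ p (p + k) ⊆ ball p r :=
    (convex_ball p r).segment_subset (mem_ball_self ((norm_nonneg k).trans_lt hk)) (by simpa)
  exact _root_.exists_isTransport
    (fun x hx => (hA.differentiableAt x (hseg hx)).continuousAt.continuousWithinAt)
    (fun x hx => hA.norm_apply_le_half (hseg hx) hk.le) e

lemma transport_sub_le (hA : IsFlatOnBall A p r C) {e : E} {α β : ℝ → E} {M : ℝ}
    (hk : ‖k‖ < r) (hkh : ‖k + h‖ < r) (hh : ‖h‖ ≤ 1) (hβ : IsTransport A p k e β)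
    (hα : IsTransport A p (k + h) e α) (hM : ∀ t ∈ Icc (0 : ℝ) 1, ‖β t‖ ≤ M) :
    ‖α 1 - β 1 - A (p + k) h (β 1)‖
      ≤ (2 * C + 3 * C ^ 2) * M * (Real.exp 1 - 1) * ‖h‖ ^ 2 := by
  have hray : ∀ l, ‖l‖ < r → ∀ t ∈ Icc (0 : ℝ) 1, p + t • l ∈ ball p r := fun l hl t ht => by
    rw [mem_ball_iff_norm, add_sub_cancel_left, norm_smul, Real.norm_of_nonneg ht.1]
    exact (mul_le_of_le_one_left (norm_nonneg l) ht.2).trans_lt hl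
  have hray' : ∀ t ∈ Icc (0 : ℝ) 1, p + t • k + t • h ∈ ball p r := fun t ht => by
    simpa only [smul_add, add_assoc] using hray (k + h) hkh t ht
  have hη : ∀ t ∈ Icc (0 : ℝ) 1, ‖t • h‖ ≤ ‖h‖ := fun t ht => by
    rw [norm_smul, Real.norm_of_nonneg ht.1]
    exact mul_le_of_le_one_left (norm_nonneg h) ht.2
  calc ‖α 1 - β 1 - A (p + k) h (β 1)‖
      ≤ gronwallBound 0 1 ((2 * C + 3 * C ^ 2) * ‖h‖ ^ 2 * M) 1 :=
        hβ.norm_sub_le hα (fun t ht => hA.differentiableAt _ (hray k hk t ht))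
          (fun t ht => (hA.norm_apply_le_half (hray' t ht) hkh.le).trans (by norm_num)) hM
          fun t ht => norm_curvature_remainder_le (hA.isFlatAt _ (hray k hk t ht))
            (hA.norm_le _ (hray k hk t ht)) (hA.norm_fderiv_le _ (hray k hk t ht))
            (by simpa using hA.taylor_le _ (hray k hk t ht) _ (hray' t ht)) (hη t ht)
            ((hη t ht).trans hh) (hkh.le.trans hA.le_one)
    _ = _ := by
      rw [gronwallBound_of_K_ne_0 one_ne_zero]
      ring_nf

end IsFlatOnBall

/-- Flatness makes parallel transport along the radii of a small ball parallel in every direction,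
not only along the radii. -/
theorem exists_isParallelOn [CompleteSpace E] {A : F → F →L[ℝ] E →L[ℝ] E} {p : F}
    (hA : ContDiffAt ℝ 2 A p) (hflat : ∀ᶠ q in 𝓝 p, IsFlatAt A q) (e : E) :
    ∃ X : F → E, X p = e ∧ ∃ r > 0, IsParallelOn A X (ball p r) := by
  obtain ⟨r, hr, C, hball⟩ := exists_isFlatOnBall hA hflat
  choose! α hα using fun k (hk : ‖k‖ < r) => hball.exists_isTransport hk e
  refine ⟨fun q => α (q - p) 1, ?_, r, hr, fun q hq => ?_⟩
  · have h₀ := hα 0 (by simpa using hr)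
    simpa using h₀.apply_one_of_zero
  have hk : ‖q - p‖ < r := mem_ball_iff_norm.1 hq
  obtain ⟨M, hM⟩ := isCompact_Icc.exists_bound_of_continuousOn
    fun t ht => ((hα _ hk).2 t ht).continuousWithinAt
  have hsmall : ∀ᶠ h : F in 𝓝 0, ‖q - p + h‖ < r ∧ ‖h‖ < 1 :=
    (Continuous.tendsto' (by fun_prop) _ _ (by simp)).eventually_lt_const hk |>.and
      ((Continuous.tendsto' (by fun_prop) _ _ (by simp)).eventually_lt_const one_pos)
  have hbigO : (fun h => α (q + h - p) 1 - α (q - p) 1 - (A q).flip (α (q - p) 1) h)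
      =O[𝓝 0] fun h => ‖h‖ ^ 2 := by
    refine .of_bound ((2 * C + 3 * C ^ 2) * M * (Real.exp 1 - 1)) ?_
    filter_upwards [hsmall] with h hh
    have := hball.transport_sub_le hk hh.1 hh.2.le (hα _ hk) (hα _ hh.1) hM
    simpa [add_sub_right_comm] using this
  exact hasFDerivAt_iff_isLittleO_nhds_zero.2
    (hbigO.trans_isLittleO (Asymptotics.isLittleO_norm_pow_id one_lt_two))

end ParallelSections

section SmoothFunctions

variable {F : Type*} [NormedAddCommGroup F] [NormedSpace ℝ F] {V : Opens F}

/-- `C^∞(V)` as a subalgebra of the functions on the subtype `V`, so that its ring structure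
ignores values off `V`; smoothness is that of the extension by zero, on `V`. -/
def smoothSubalgebra (V : Opens F) : Subalgebra ℝ (V → ℝ) where
  carrier := {f | ContDiffOn ℝ ∞ (Function.extend Subtype.val f 0) V}
  mul_mem' hf hg := (ContDiffOn.mul hf hg).congr fun q hq => by
    lift q to V using hq
    simp
  add_mem' hf hg := (ContDiffOn.add hf hg).congr fun q hq => by
    lift q to V using hq
    simp
  algebraMap_mem' c := contDiffOn_const.congr fun q hq =>
    Subtype.val_injective.extend_apply _ _ ⟨q, hq⟩

/-- The algebra `C^∞(V)` of smooth real functions on the open set `V`. -/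
abbrev SmoothOn (V : Opens F) : Type _ := smoothSubalgebra V

namespace SmoothOn

/-- The extension of `f ∈ C^∞(V)` to the whole space by zero. -/
noncomputable def extend (f : SmoothOn V) : F → ℝ :=
  Function.extend Subtype.val f.1 0

lemma contDiffOn_extend (f : SmoothOn V) : ContDiffOn ℝ ∞ f.extend V := f.2

@[simp]
lemma extend_apply (f : SmoothOn V) (q : V) : f.extend q = f.1 q :=
  Subtype.val_injective.extend_apply f.1 0 q

/-- The restriction to `V` of a function which is smooth on `V`. -/
def restrict (f : F → ℝ) (hf : ContDiffOn ℝ ∞ f V) : SmoothOn V :=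
  ⟨fun q => f q, hf.congr fun q hq => Subtype.val_injective.extend_apply _ _ ⟨q, hq⟩⟩

@[simp]
lemma coe_restrict_apply {f : F → ℝ} (hf : ContDiffOn ℝ ∞ f V) (q : V) :
    (restrict f hf).1 q = f q := rfl

@[simp]
lemma coe_ofNat (n : ℕ) [n.AtLeastTwo] :
    ((ofNat(n) : SmoothOn V) : V → ℝ) = ofNat(n) := rfl

lemma extend_restrict_eventuallyEq {f : F → ℝ} (hf : ContDiffOn ℝ ∞ f V) (q : V) :
    (restrict f hf).extend =ᶠ[𝓝 (q : F)] f := by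
  filter_upwards [V.isOpen.mem_nhds q.2] with x hx using extend_apply (restrict f hf) ⟨x, hx⟩

lemma contDiffAt_extend (f : SmoothOn V) (q : V) : ContDiffAt ℝ ∞ f.extend q :=
  f.contDiffOn_extend.contDiffAt (V.isOpen.mem_nhds q.2)

lemma hasFDerivAt_extend (f : SmoothOn V) (q : V) :
    HasFDerivAt f.extend (fderiv ℝ f.extend q) q :=
  ((f.contDiffAt_extend q).differentiableAt (by simp)).hasFDerivAt

lemma isUnit_of_ne_zero {f : SmoothOn V} (hf : ∀ q, f.1 q ≠ 0) : IsUnit f := by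
  have hinv : ContDiffOn ℝ ∞ (fun q => (f.extend q)⁻¹) V :=
    f.contDiffOn_extend.inv fun q hq => (f.extend_apply ⟨q, hq⟩).trans_ne (hf ⟨q, hq⟩)
  refine .of_mul_eq_one (restrict _ hinv) <| Subtype.ext <| funext fun q => ?_
  simp [hf q]

lemma extend_mul (f g : SmoothOn V) : (f * g).extend = f.extend * g.extend := by
  simpa [extend] using Function.extend_mul Subtype.val f.1 g.1 0 0

lemma extend_add (f g : SmoothOn V) : (f + g).extend = f.extend + g.extend := by
  simpa [extend] using Function.extend_add Subtype.val f.1 g.1 0 0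

lemma extend_smul (c : ℝ) (f : SmoothOn V) : (c • f).extend = c • f.extend := by
  simpa [extend] using Function.extend_smul c Subtype.val f.1 0

/-- The derivation of `C^∞(V)` which differentiates in the direction `w`. -/
noncomputable def dir (w : F) : Derivation ℝ (SmoothOn V) (SmoothOn V) :=
  Derivation.mk'
    { toFun f := restrict (fun q => fderiv ℝ f.extend q w) <|
        (f.contDiffOn_extend.fderiv_of_isOpen V.isOpen (by simp)).clm_apply contDiffOn_const
      map_add' f g := Subtype.ext <| funext fun q => by
        simp [extend_add f g,
          fderiv_add (f.hasFDerivAt_extend q).differentiableAt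
            (g.hasFDerivAt_extend q).differentiableAt]
      map_smul' c f := Subtype.ext <| funext fun q => by
        simp [extend_smul c f,
          fderiv_const_smul (f.hasFDerivAt_extend q).differentiableAt] }
    fun f g => Subtype.ext <| funext fun q => by
      simp [extend_mul f g,
          fderiv_mul (f.hasFDerivAt_extend q).differentiableAt
            (g.hasFDerivAt_extend q).differentiableAt]

lemma dir_apply (w : F) (f : SmoothOn V) (q : V) : (dir w f).1 q = fderiv ℝ f.extend q w := rfl

lemma dir_comm (v w : F) (f : SmoothOn V) : dir v (dir w f) = dir w (dir v f) := by
  refine Subtype.ext <| funext fun q => ?_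
  have hsymm : IsSymmSndFDerivAt ℝ f.extend q :=
    (f.contDiffAt_extend q).isSymmSndFDerivAt (by simpa using ENat.LEInfty.out)
  have hdiff : DifferentiableAt ℝ (fderiv ℝ f.extend) q :=
    ((f.contDiffAt_extend q).fderiv_right (m := ∞) (by simp)).differentiableAt (by simp)
  have hsnd (v w : F) : (dir v (dir w f)).1 q = fderiv ℝ (fderiv ℝ f.extend) q v w := by
    have hdir : (dir w f).extend =ᶠ[𝓝 (q : F)] fun x => fderiv ℝ f.extend x w :=
      extend_restrict_eventuallyEq _ q
    rw [dir_apply, hdir.fderiv_eq,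
      (hdiff.hasFDerivAt.clm_apply (hasFDerivAt_const w _)).fderiv]
    simp
  rw [hsnd, hsnd, hsymm.eq]

end SmoothOn

end SmoothFunctions

/-- The coefficients of the cubic equation `y'' = a₃ y'³ + 3 a₂ y'² + 3 a₁ y' + a₀`, in a ring `R`
which carries two commuting derivations playing the roles of `∂ₓ` and `∂_y`. The binomial factors
keep all formulas below integral. -/
structure CubicODE (R : Type*) where
  (a₀ a₁ a₂ a₃ : R)

namespace CubicODE

open Matrix

variable {k R : Type*} [CommRing k] [CommRing R] [Algebra k R]
  (Dx Dy : Derivation k R R) (C : CubicODE R)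

/-- Liouville's first relative invariant. -/
def L₁ : R :=
  2 * Dx (Dy C.a₁) - Dx (Dx C.a₂) - Dy (Dy C.a₀) + 3 * C.a₀ * Dy C.a₂ + 3 * C.a₂ * Dy C.a₀
    - C.a₃ * Dx C.a₀ - 2 * C.a₀ * Dx C.a₃ - 6 * C.a₁ * Dy C.a₁ + 3 * C.a₁ * Dx C.a₂

/-- Liouville's second relative invariant. -/
def L₂ : R :=
  2 * Dx (Dy C.a₂) - Dy (Dy C.a₁) - Dx (Dx C.a₃) - 3 * C.a₃ * Dx C.a₁ - 3 * C.a₁ * Dx C.a₃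
    + C.a₀ * Dy C.a₃ + 2 * C.a₃ * Dy C.a₀ + 6 * C.a₂ * Dx C.a₂ - 3 * C.a₂ * Dy C.a₁

section Tractor

/-- The `xx` component of minus the Schouten tensor of the projective connection. -/
def schoutenXX : R := Dy C.a₀ - Dx C.a₁ + 2 * C.a₁ ^ 2 - 2 * C.a₀ * C.a₂

/-- The `xy` component of minus the Schouten tensor of the projective connection. -/
def schoutenXY : R := Dy C.a₁ - Dx C.a₂ + C.a₁ * C.a₂ - C.a₀ * C.a₃

/-- The `yy` component of minus the Schouten tensor of the projective connection. -/
def schoutenYY : R := Dy C.a₂ - Dx C.a₃ + 2 * C.a₂ ^ 2 - 2 * C.a₁ * C.a₃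

/-- The matrix `M` of the system `∂ₓF = M F`, `∂_yF = N F` for `F = (f, fₓ, f_y)`. -/
def tractorX : Matrix (Fin 3) (Fin 3) R :=
  !![0, 1, 0;
     C.schoutenXX Dx Dy, C.a₁, -C.a₀;
     C.schoutenXY Dx Dy, C.a₂, -C.a₁]

/-- The matrix `N` of the system `∂ₓF = M F`, `∂_yF = N F` for `F = (f, fₓ, f_y)`. -/
def tractorY : Matrix (Fin 3) (Fin 3) R :=
  !![0, 0, 1;
     C.schoutenXY Dx Dy, C.a₂, -C.a₁;
     C.schoutenYY Dx Dy, C.a₃, -C.a₂]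

theorem tractor_curvature (hcomm : ∀ f, Dx (Dy f) = Dy (Dx f)) :
    (C.tractorX Dx Dy).map Dy + C.tractorX Dx Dy * C.tractorY Dx Dy
      - ((C.tractorY Dx Dy).map Dx + C.tractorY Dx Dy * C.tractorX Dx Dy)
      = !![0, 0, 0; -C.L₁ Dx Dy, 0, 0; -C.L₂ Dx Dy, 0, 0] := by
  have hx : Dx 2 = 0 := Dx.map_natCast 2
  have hy : Dy 2 = 0 := Dy.map_natCast 2
  ext i j
  fin_cases i <;> fin_cases j <;>
    simp [tractorX, tractorY, schoutenXX, schoutenXY, schoutenYY, L₁, L₂, hcomm, hx, hy] <;> ring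

end Tractor

section Affine

variable {Dx Dy C} {u v a b c d e f : R}

/-- The Jacobian determinant of `(u, v)`. -/
def jacobian (Dx Dy : Derivation k R R) (u v : R) : R := Dx u * Dy v - Dy u * Dx v

lemma eq_zero_of_linear_relations {s t : R} (hJ : IsUnit (jacobian Dx Dy u v))
    (hu : s * Dx u + t * Dy u = 0) (hv : s * Dx v + t * Dy v = 0) : s = 0 ∧ t = 0 := by
  refine ⟨hJ.mul_left_eq_zero.1 ?_, hJ.mul_left_eq_zero.1 ?_⟩ <;> rw [jacobian]
  · linear_combination Dy v * hu - Dy u * hv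
  · linear_combination Dx u * hv - Dx v * hu

/-- `w` is an affine function for the torsion-free connection with Christoffel symbols
`Γˣₓₓ = a`, `Γʸₓₓ = b`, `Γˣₓᵧ = c`, `Γʸₓᵧ = d`, `Γˣᵧᵧ = e`, `Γʸᵧᵧ = f`: its covariant Hessian
vanishes. -/
structure HasZeroHessian (Dx Dy : Derivation k R R) (a b c d e f w : R) : Prop where
  xx : Dx (Dx w) = a * Dx w + b * Dy w
  xy : Dx (Dy w) = c * Dx w + d * Dy w
  yy : Dy (Dy w) = e * Dx w + f * Dy w

lemma HasZeroHessian.compat_xxy (hcomm : ∀ f, Dx (Dy f) = Dy (Dx f)) {w : R}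
    (hw : HasZeroHessian Dx Dy a b c d e f w) :
    (Dy a + b * e - Dx c - d * c) * Dx w
      + (Dy b + a * d + b * f - Dx d - c * b - d ^ 2) * Dy w = 0 := by
  have h : Dy (a * Dx w + b * Dy w) = Dx (c * Dx w + d * Dy w) := by
    rw [← hw.xx, ← hw.xy, ← hcomm, ← hcomm]
  simp only [Derivation.leibniz, map_add, smul_eq_mul, ← hcomm, hw.xx, hw.xy, hw.yy] at h
  linear_combination h

lemma HasZeroHessian.compat_xyy (hcomm : ∀ f, Dx (Dy f) = Dy (Dx f)) {w : R}
    (hw : HasZeroHessian Dx Dy a b c d e f w) :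
    (Dy c + c ^ 2 + d * e - Dx e - e * a - f * c) * Dx w
      + (Dy d + c * d - Dx f - e * b) * Dy w = 0 := by
  have h : Dy (c * Dx w + d * Dy w) = Dx (e * Dx w + f * Dy w) := by
    rw [← hw.xy, ← hw.yy, ← hcomm]
  simp only [Derivation.leibniz, map_add, smul_eq_mul, ← hcomm, hw.xx, hw.xy, hw.yy] at h
  linear_combination h

theorem compat_of_hasZeroHessian (hcomm : ∀ f, Dx (Dy f) = Dy (Dx f))
    (hJ : IsUnit (jacobian Dx Dy u v)) (hu : HasZeroHessian Dx Dy a b c d e f u)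
    (hv : HasZeroHessian Dx Dy a b c d e f v) :
    Dy a + b * e = Dx c + d * c ∧ Dy b + a * d + b * f = Dx d + c * b + d ^ 2 ∧
      Dy c + c ^ 2 + d * e = Dx e + e * a + f * c ∧ Dy d + c * d = Dx f + e * b := by
  have h₁ := eq_zero_of_linear_relations hJ (hu.compat_xxy hcomm) (hv.compat_xxy hcomm)
  have h₂ := eq_zero_of_linear_relations hJ (hu.compat_xyy hcomm) (hv.compat_xyy hcomm)
  refine ⟨?_, ?_, ?_, ?_⟩
  · linear_combination h₁.1
  · linear_combination h₁.2
  · linear_combination h₂.1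
  · linear_combination h₂.2

/-- The point transformation `(x, y) ↦ (u, v)` carries the solutions of `C` to straight lines: the
cubic polynomial `u' v'' - v' u''` in the slope `y'`, with `y''` eliminated by the equation,
vanishes identically. The four fields are its coefficients. -/
structure IsStraightenedBy (C : CubicODE R) (Dx Dy : Derivation k R R) (u v : R) : Prop where
  coeff₀ : C.a₀ * jacobian Dx Dy u v = Dx v * Dx (Dx u) - Dx u * Dx (Dx v)
  coeff₁ : 3 * C.a₁ * jacobian Dx Dy u v = Dy v * Dx (Dx u) - Dy u * Dx (Dx v)
    + 2 * (Dx v * Dx (Dy u) - Dx u * Dx (Dy v))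
  coeff₂ : 3 * C.a₂ * jacobian Dx Dy u v = Dx v * Dy (Dy u) - Dx u * Dy (Dy v)
    + 2 * (Dy v * Dx (Dy u) - Dy u * Dx (Dy v))
  coeff₃ : C.a₃ * jacobian Dx Dy u v = Dy v * Dy (Dy u) - Dy u * Dy (Dy v)

namespace IsStraightenedBy

-- `c` and `d` are the mixed Christoffel symbols of the pullback of the flat connection by `(u, v)`.
lemma exists_hasZeroHessian (h : C.IsStraightenedBy Dx Dy u v)
    (hJ : IsUnit (jacobian Dx Dy u v)) : ∃ c d, ∀ w ∈ ({u, v} : Set R),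
      HasZeroHessian Dx Dy (3 * C.a₁ + 2 * d) (-C.a₀) c d C.a₃ (2 * c - 3 * C.a₂) w := by
  obtain ⟨J, hJ'⟩ := hJ
  obtain ⟨h₀, h₁, h₂, h₃⟩ := h
  rw [← hJ', ← Units.eq_mul_inv_iff_mul_eq] at h₀ h₁ h₂ h₃
  have hinv : (Dx u * Dy v - Dy u * Dx v) * ↑J⁻¹ = 1 := by rw [← jacobian, ← hJ', J.mul_inv]
  refine ⟨(Dx (Dy u) * Dy v - Dx (Dy v) * Dy u) * ↑J⁻¹,
    (Dx u * Dx (Dy v) - Dx v * Dx (Dy u)) * ↑J⁻¹, ?_⟩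
  rintro w (rfl | rfl) <;> constructor <;> (try rw [h₁, h₀]) <;> (try rw [h₂, h₃])
  · linear_combination -Dx (Dx w) * hinv
  · linear_combination -Dx (Dy w) * hinv
  · linear_combination -Dy (Dy w) * hinv
  · linear_combination -Dx (Dx w) * hinv
  · linear_combination -Dx (Dy w) * hinv
  · linear_combination -Dy (Dy w) * hinv

theorem three_mul_invariants_eq_zero (h : C.IsStraightenedBy Dx Dy u v)
    (hcomm : ∀ f, Dx (Dy f) = Dy (Dx f)) (hJ : IsUnit (jacobian Dx Dy u v)) :
    3 * C.L₁ Dx Dy = 0 ∧ 3 * C.L₂ Dx Dy = 0 := by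
  obtain ⟨c, d, hw⟩ := h.exists_hasZeroHessian hJ
  obtain ⟨K₁, K₂, K₃, K₄⟩ :=
    compat_of_hasZeroHessian hcomm hJ (hw u (by simp)) (hw v (by simp))
  have hx₂ : Dx 2 = 0 := Dx.map_natCast 2
  have hx₃ : Dx 3 = 0 := Dx.map_natCast 3
  have hy₂ : Dy 2 = 0 := Dy.map_natCast 2
  have hy₃ : Dy 3 = 0 := Dy.map_natCast 3
  simp only [Derivation.leibniz, map_add, map_sub, map_neg, smul_eq_mul, hx₂, hx₃, hy₂, hy₃]
    at K₁ K₂ K₃ K₄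
  have hdx : Dx d = -Dy C.a₀ + 3 * (C.a₁ * d) + d * d - C.a₀ * c + 3 * (C.a₀ * C.a₂) := by
    linear_combination -K₂
  have hdy : 3 * Dy d = 3 * (c * d + Dx C.a₂ - 2 * Dy C.a₁ + C.a₀ * C.a₃) := by
    linear_combination 2 * K₁ - K₄
  have hcx : 3 * Dx c = 3 * (c * d + 2 * Dx C.a₂ - Dy C.a₁ + C.a₀ * C.a₃) := by
    linear_combination K₁ - 2 * K₄
  have hcy : Dy c = Dx C.a₃ + 3 * (C.a₁ * C.a₃) + C.a₃ * d + c * c - 3 * (C.a₂ * c) := by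
    linear_combination K₃
  have hd : Dx (3 * Dy d) = 3 * Dy (Dx d) := by simp [hx₃, hcomm]
  have hc : Dy (3 * Dx c) = 3 * Dx (Dy c) := by simp [hy₃, hcomm]
  rw [hdx, hdy] at hd
  rw [hcx, hcy] at hc
  simp only [Derivation.leibniz, map_add, map_sub, map_neg, smul_eq_mul, hx₂, hx₃, hy₂, hy₃,
    hcomm] at hd hc
  simp only [L₁, L₂, hcomm]
  constructor
  · linear_combination -hd + d * hcx + 3 * c * hdx - (3 * C.a₁ + 2 * d) * hdy + 3 * C.a₀ * hcy
  · linear_combination hc - c * hdy - 3 * d * hcy + (2 * c - 3 * C.a₂) * hcx + 3 * C.a₃ * hdx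

end IsStraightenedBy

end Affine

end CubicODE

section ODE

variable {E : Type*} [NormedAddCommGroup E] [NormedSpace ℝ E]

lemma eqOn_zero_of_hasDerivAt_linear {A : ℝ → E →L[ℝ] E} {Z : ℝ → E} {a b t₀ : ℝ}
    (hA : ContinuousOn A (Ioo a b)) (hZ : ∀ t ∈ Ioo a b, HasDerivAt Z (A t (Z t)) t)
    (ht₀ : t₀ ∈ Ioo a b) (hZ₀ : Z t₀ = 0) : EqOn Z 0 (Ioo a b) := by
  intro t ht
  obtain ⟨c, hac, hc⟩ := exists_between (lt_min ht.1 ht₀.1)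
  obtain ⟨d, hd, hdb⟩ := exists_between (max_lt ht.2 ht₀.2)
  rw [lt_min_iff] at hc
  rw [max_lt_iff] at hd
  have hsub : Icc c d ⊆ Ioo a b := Icc_subset_Ioo hac hdb
  obtain ⟨K, hK⟩ := isCompact_Icc.exists_bound_of_continuousOn (hA.mono hsub)
  refine ODE_solution_unique_of_mem_Ioo (v := fun t => A t) (s := fun _ => univ)
    (K := K.toNNReal) (fun τ hτ => ?_) ⟨hc.2, hd.2⟩
    (fun τ hτ => ⟨hZ τ (hsub (Ioo_subset_Icc_self hτ)), mem_univ _⟩)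
    (fun τ _ => ⟨?_, mem_univ _⟩) hZ₀ ⟨hc.1, hd.1⟩
  · have hle : ‖A τ‖₊ ≤ K.toNNReal :=
      NNReal.coe_le_coe.1 <| (hK τ (Ioo_subset_Icc_self hτ)).trans (Real.le_coe_toNNReal K)
    exact ((A τ).lipschitz.weaken hle).lipschitzOnWith
  · exact (hasDerivAt_const τ (0 : E)).congr_deriv (map_zero (A τ)).symm

lemma eqOn_zero_of_hasDerivAt_linear_second_order {z w : ℝ → E} {B C : ℝ → ℝ} {a b t₀ : ℝ}
    (hB : ContinuousOn B (Ioo a b)) (hC : ContinuousOn C (Ioo a b))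
    (hz : ∀ t ∈ Ioo a b, HasDerivAt z (w t) t)
    (hw : ∀ t ∈ Ioo a b, HasDerivAt w (B t • w t + C t • z t) t)
    (ht₀ : t₀ ∈ Ioo a b) (hz₀ : z t₀ = 0) (hw₀ : w t₀ = 0) : EqOn z 0 (Ioo a b) := by
  let A (t : ℝ) : E × E →L[ℝ] E × E :=
    (ContinuousLinearMap.inl ℝ E E ∘L .snd ℝ E E)
      + ContinuousLinearMap.inr ℝ E E ∘L (B t • .snd ℝ E E + C t • .fst ℝ E E)
  have hA : ContinuousOn A (Ioo a b) :=
    continuousOn_const.add <| continuousOn_const.clm_comp <|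
      (hB.smul continuousOn_const).add (hC.smul continuousOn_const)
  have hZ := eqOn_zero_of_hasDerivAt_linear (Z := fun t => (z t, w t)) hA
    (fun t ht => ((hz t ht).prodMk (hw t ht)).congr_deriv (by simp [A])) ht₀ (by simp [hz₀, hw₀])
  exact fun t ht => congrArg Prod.fst (hZ ht)

lemma exists_hasDerivAt_second_order [CompleteSpace E] {f : ℝ × E × E → E} {x₀ : ℝ} {y₀ s : E}
    (hf : ContDiffAt ℝ 1 f (x₀, y₀, s)) :
    ∃ y : ℝ → E, y x₀ = y₀ ∧ deriv y x₀ = s ∧ ∃ ε > 0, ∀ x ∈ Ioo (x₀ - ε) (x₀ + ε),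
      HasDerivAt y (deriv y x) x ∧ HasDerivAt (deriv y) (f (x, y x, deriv y x)) x := by
  have hf' : ContDiffAt ℝ 1 (fun z : ℝ × E × E => ((1 : ℝ), z.2.2, f z)) (x₀, y₀, s) := by fun_prop
  obtain ⟨X, hX₀, ε, hε, hX⟩ :=
    hf'.exists_forall_mem_closedBall_exists_eq_forall_mem_Ioo_hasDerivAt₀ x₀
  set I := Ioo (x₀ - ε) (x₀ + ε)
  have hx₀ : x₀ ∈ I := by simp [I, hε]
  have hX₁ : ∀ x ∈ I, HasDerivAt (fun x => (X x).1) 1 x :=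
    fun x hx => by simpa using (hX x hx).hasFDerivAt.fst.hasDerivAt
  have hX₂ : ∀ x ∈ I, HasDerivAt (fun x => (X x).2) ((X x).2.2, f (X x)) x :=
    fun x hx => by simpa using (hX x hx).hasFDerivAt.snd.hasDerivAt
  have hy : ∀ x ∈ I, HasDerivAt (fun x => (X x).2.1) (X x).2.2 x :=
    fun x hx => by simpa using (hX₂ x hx).hasFDerivAt.fst.hasDerivAt
  have hs : ∀ x ∈ I, HasDerivAt (fun x => (X x).2.2) (f (X x)) x :=
    fun x hx => by simpa using (hX₂ x hx).hasFDerivAt.snd.hasDerivAt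
  have htime : EqOn (fun x => (X x).1) id I := by
    refine isOpen_Ioo.eqOn_of_deriv_eq isPreconnected_Ioo
      (fun x hx => (hX₁ x hx).differentiableAt.differentiableWithinAt) differentiableOn_id
      (fun x hx => ?_) hx₀ (by simp [hX₀])
    rw [(hX₁ x hx).deriv, deriv_id]
  have hy' : EqOn (deriv fun x => (X x).2.1) (fun x => (X x).2.2) I := fun x hx => (hy x hx).deriv
  refine ⟨fun x => (X x).2.1, by simp [hX₀], by simp [hy' hx₀, hX₀], ε, hε, fun x hx => ?_⟩
  have hXx : (x, (X x).2.1, (X x).2.2) = X x := Prod.ext (htime hx).symm rfl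
  simp only [hy' hx, hXx]
  exact ⟨hy x hx, (hs x hx).congr_of_eventuallyEq <|
    hy'.eventuallyEq_of_mem (isOpen_Ioo.mem_nhds hx)⟩

end ODE

section InverseFunction

variable {E F : Type*} [NormedAddCommGroup E] [NormedSpace ℝ E] [NormedAddCommGroup F]
  [NormedSpace ℝ F]

/-- `Φ` restricts to a smooth diffeomorphism from `U` onto an open set, with inverse `Ψ`. -/
structure IsDiffeoOntoOpen (Φ : E → F) (Ψ : F → E) (U : Set E) : Prop where
  contDiffOn : ContDiffOn ℝ ∞ Φ U
  isOpen_image : IsOpen (Φ '' U)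
  contDiffOn_inv : ContDiffOn ℝ ∞ Ψ (Φ '' U)
  leftInvOn : LeftInvOn Ψ Φ U

lemma exists_isDiffeoOntoOpen [CompleteSpace E] {Φ : E → F} {V : Set E} (hV : IsOpen V)
    (hΦ : ContDiffOn ℝ ∞ Φ V) {p : E} (hp : p ∈ V) {e : E ≃L[ℝ] F}
    (he : HasFDerivAt Φ (e : E →L[ℝ] F) p) :
    ∃ U ⊆ V, IsOpen U ∧ p ∈ U ∧ ∃ Ψ, IsDiffeoOntoOpen Φ Ψ U := by
  have hat : ∀ q ∈ V, ContDiffAt ℝ ∞ Φ q := fun q hq => hΦ.contDiffAt (hV.mem_nhds hq)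
  have hne : (∞ : WithTop ℕ∞) ≠ 0 := by simp
  let H := (hat p hp).toOpenPartialHomeomorph Φ he hne
  have hH : H = Φ := (hat p hp).toOpenPartialHomeomorph_coe he hne
  have hpH : p ∈ H.source := (hat p hp).mem_toOpenPartialHomeomorph_source he hne
  have hinv : ∀ᶠ q in 𝓝 p, fderiv ℝ Φ q ∈ range ((↑) : (E ≃L[ℝ] F) → E →L[ℝ] F) :=
    ((hat p hp).fderiv_right (m := 0) (by simp)).continuousAt.eventually
      (by rw [he.fderiv]; exact ContinuousLinearEquiv.nhds e)
  obtain ⟨W, hW, hWo, hpW⟩ := _root_.eventually_nhds_iff.1 hinv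
  have hopen : IsOpen (W ∩ (H.source ∩ V)) := hWo.inter (H.open_source.inter hV)
  have hleft : LeftInvOn H.symm Φ H.source := hH ▸ H.leftInvOn
  refine ⟨W ∩ (H.source ∩ V), fun q hq => hq.2.2, hopen, ⟨hpW, hpH, hp⟩, H.symm,
    hΦ.mono fun q hq => hq.2.2, ?_, ?_, hleft.mono fun q hq => hq.2.1⟩
  · rw [← hH]
    exact H.isOpen_image_of_subset_source hopen fun q hq => hq.2.1
  · rintro _ ⟨q, hq, rfl⟩
    obtain ⟨e', he'⟩ := hW q hq.1
    refine (H.contDiffAt_symm (f₀' := e') (hH ▸ H.map_source hq.2.1) ?_ ?_).contDiffWithinAt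
    · rw [hleft hq.2.1, hH, he']
      exact ((hat q hq.2.2).differentiableAt hne).hasFDerivAt
    · rw [hleft hq.2.1, hH]
      exact hat q hq.2.2

end InverseFunction

section Connections

variable {E F : Type*} [NormedAddCommGroup E] [NormedSpace ℝ E] [NormedAddCommGroup F]
  [NormedSpace ℝ F]

lemma exists_parallel_frame [CompleteSpace E] {ι : Type*} [Finite ι]
    {A : F → F →L[ℝ] E →L[ℝ] E} {p : F} (hA : ContDiffAt ℝ 2 A p)
    (hflat : ∀ᶠ q in 𝓝 p, IsFlatAt A q) (e : ι → E) :
    ∃ X : ι → F → E, (∀ i, X i p = e i) ∧ ∃ r > 0, ∀ i, IsParallelOn A (X i) (ball p r) := by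
  choose X hXp R hR hX using fun i => exists_isParallelOn hA hflat (e i)
  have hev : ∀ᶠ r in 𝓝[>] (0 : ℝ), ∀ i, IsParallelOn A (X i) (ball p r) :=
    eventually_all.2 fun i => by
      filter_upwards [Ioc_mem_nhdsGT (hR i)] with r hr
      exact (hX i).mono (ball_subset_ball hr.2)
  obtain ⟨r, hr, hr₀⟩ := (hev.and self_mem_nhdsWithin).exists
  exact ⟨X, hXp, r, hr₀, hr⟩

/-- The connection form `m dx + n dy` on the plane, with coefficients acting on the fibre `E`. -/
noncomputable def connectionForm (m n : ℝ × ℝ → E →L[ℝ] E) (q : ℝ × ℝ) :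
    ℝ × ℝ →L[ℝ] E →L[ℝ] E :=
  (ContinuousLinearMap.fst ℝ ℝ ℝ).smulRight (m q) + (ContinuousLinearMap.snd ℝ ℝ ℝ).smulRight (n q)

variable {m n : ℝ × ℝ → E →L[ℝ] E} {q : ℝ × ℝ}

@[simp]
lemma connectionForm_apply (w : ℝ × ℝ) : connectionForm m n q w = w.1 • m q + w.2 • n q := rfl

lemma contDiffAt_connectionForm {k : WithTop ℕ∞} (hm : ContDiffAt ℝ k m q)
    (hn : ContDiffAt ℝ k n q) : ContDiffAt ℝ k (connectionForm m n) q :=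
  (contDiffAt_const.smulRight hm).add (contDiffAt_const.smulRight hn)

lemma fderiv_connectionForm (hm : ContDiffAt ℝ 1 m q) (hn : ContDiffAt ℝ 1 n q) (u v : ℝ × ℝ) :
    fderiv ℝ (connectionForm m n) q u v = v.1 • fderiv ℝ m q u + v.2 • fderiv ℝ n q u := by
  have hder : HasFDerivAt (fun q => connectionForm m n q v)
      (v.1 • fderiv ℝ m q + v.2 • fderiv ℝ n q) q :=
    ((hm.differentiableAt one_ne_zero).hasFDerivAt.const_smul v.1).add
      ((hn.differentiableAt one_ne_zero).hasFDerivAt.const_smul v.2)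
  have hA : HasFDerivAt (connectionForm m n) (fderiv ℝ (connectionForm m n) q) q :=
    ((contDiffAt_connectionForm hm hn).differentiableAt one_ne_zero).hasFDerivAt
  simpa using DFunLike.congr_fun ((hA.clm_apply (hasFDerivAt_const v q)).unique hder) u

lemma isFlatAt_connectionForm (hm : ContDiffAt ℝ 1 m q) (hn : ContDiffAt ℝ 1 n q)
    (h : fderiv ℝ m q (0, 1) + m q ∘L n q = fderiv ℝ n q (1, 0) + n q ∘L m q) :
    IsFlatAt (connectionForm m n) q := by
  have hsplit (l : ℝ × ℝ →L[ℝ] E →L[ℝ] E) (u : ℝ × ℝ) : l u = u.1 • l (1, 0) + u.2 • l (0, 1) := by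
    rw [← map_smul, ← map_smul, ← map_add]
    simp
  intro u v
  simp only [fderiv_connectionForm hm hn, connectionForm_apply, ContinuousLinearMap.add_comp,
    ContinuousLinearMap.comp_add, ContinuousLinearMap.smul_comp, ContinuousLinearMap.comp_smul]
  rw [hsplit (fderiv ℝ m q) u, hsplit (fderiv ℝ m q) v, hsplit (fderiv ℝ n q) u,
    hsplit (fderiv ℝ n q) v]
  linear_combination (norm := module) (u.2 * v.1 - u.1 * v.2) • h

lemma IsParallelOn.hasDerivAt_graph {X : ℝ × ℝ → E} {V : Set (ℝ × ℝ)}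
    (hX : IsParallelOn (connectionForm m n) X V) {y : ℝ → ℝ} {y' t : ℝ} (hq : (t, y t) ∈ V)
    (hy : HasDerivAt y y' t) :
    HasDerivAt (fun τ => X (τ, y τ))
      (m (t, y t) (X (t, y t)) + y' • n (t, y t) (X (t, y t))) t := by
  simpa [Function.comp_def] using (hX _ hq).comp_hasDerivAt t ((hasDerivAt_id t).prodMk hy)

end Connections

section MatrixCoefficients

open Matrix

variable {F ι : Type*} [NormedAddCommGroup F] [NormedSpace ℝ F] [Fintype ι] {V : Opens F}

namespace SmoothOn

/-- The endomorphism of `ℝ^ι` given at the point `q` by a matrix of smooth functions. -/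
noncomputable def mulVecCLM (M : Matrix ι ι (SmoothOn V)) (q : F) : (ι → ℝ) →L[ℝ] (ι → ℝ) :=
  LinearMap.toContinuousLinearMap (M.map fun f => f.extend q).mulVecLin

variable (M N : Matrix ι ι (SmoothOn V))

@[simp]
lemma mulVecCLM_apply (q : F) (x : ι → ℝ) :
    mulVecCLM M q x = (M.map fun f => f.extend q) *ᵥ x := rfl

lemma mulVecCLM_add (q : V) : mulVecCLM (M + N) q = mulVecCLM M q + mulVecCLM N q := by
  ext x i
  simp [mulVec, dotProduct, add_mul, Finset.sum_add_distrib]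

lemma mulVecCLM_mul (q : V) : mulVecCLM (M * N) q = mulVecCLM M q ∘L mulVecCLM N q := by
  have hmul : (M * N).map (fun f => f.extend q)
      = M.map (fun f => f.extend q) * N.map fun f => f.extend q := by
    ext i j
    simp [mul_apply]
  ext x : 1
  simp only [mulVecCLM_apply, hmul, ContinuousLinearMap.comp_apply, mulVec_mulVec]

lemma contDiffOn_mulVecCLM : ContDiffOn ℝ ∞ (mulVecCLM M) V :=
  contDiffOn_clm_apply.2 fun _ => contDiffOn_pi.2 fun i =>
    ContDiffOn.sum fun j _ => (M i j).contDiffOn_extend.mul contDiffOn_const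

lemma fderiv_mulVecCLM (q : V) (w : F) :
    fderiv ℝ (mulVecCLM M) q w = mulVecCLM (M.map (dir w)) q := by
  ext x i
  have hdiff : DifferentiableAt ℝ (mulVecCLM M) q :=
    ((contDiffOn_mulVecCLM M).contDiffAt (V.isOpen.mem_nhds q.2)).differentiableAt (by simp)
  have hsum : HasFDerivAt (fun q => mulVecCLM M q x i)
      (∑ j, x j • fderiv ℝ (M i j).extend q) q :=
    HasFDerivAt.fun_sum fun j _ => ((M i j).hasFDerivAt_extend q).mul_const (x j)
  have hcomp := hasFDerivAt_pi'.1 (hdiff.hasFDerivAt.clm_apply (hasFDerivAt_const x _)) i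
  have := DFunLike.congr_fun (hcomp.unique hsum) w
  simpa [mulVec, dotProduct, dir_apply, mul_comm] using this

end SmoothOn

lemma isFlatAt_connectionForm_mulVecCLM {V : Opens (ℝ × ℝ)} {M N : Matrix ι ι (SmoothOn V)}
    (h : M.map (SmoothOn.dir (0, 1)) + M * N = N.map (SmoothOn.dir (1, 0)) + N * M) (q : V) :
    IsFlatAt (connectionForm (SmoothOn.mulVecCLM M) (SmoothOn.mulVecCLM N)) q := by
  have hsmooth (M : Matrix ι ι (SmoothOn V)) : ContDiffAt ℝ 1 (SmoothOn.mulVecCLM M) q :=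
    ((SmoothOn.contDiffOn_mulVecCLM M).contDiffAt (V.isOpen.mem_nhds q.2)).of_le (by simp)
  apply isFlatAt_connectionForm (hsmooth M) (hsmooth N)
  simp only [SmoothOn.fderiv_mulVecCLM, ← SmoothOn.mulVecCLM_mul, ← SmoothOn.mulVecCLM_add, h]

end MatrixCoefficients

section Solutions

open Matrix SmoothOn

variable {V : Opens (ℝ × ℝ)}

/-- The derivation `∂ₓ` of `C^∞(V)`, for `V` in the plane with coordinates `(x, y)`. -/
noncomputable abbrev SmoothOn.dx (V : Opens (ℝ × ℝ)) : Derivation ℝ (SmoothOn V) (SmoothOn V) :=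
  dir (1, 0)

/-- The derivation `∂_y` of `C^∞(V)`, for `V` in the plane with coordinates `(x, y)`. -/
noncomputable abbrev SmoothOn.dy (V : Opens (ℝ × ℝ)) : Derivation ℝ (SmoothOn V) (SmoothOn V) :=
  dir (0, 1)

namespace CubicODE

/-- `y` solves the cubic equation `C` on `Ioo a b`, with graph contained in `W`. -/
def IsSolution (C : CubicODE (SmoothOn V)) (W : Set (ℝ × ℝ)) (y : ℝ → ℝ) (a b : ℝ) : Prop :=
  IsODESolution W C.a₀.extend ((3 : ℝ) • C.a₁).extend ((3 : ℝ) • C.a₂).extend C.a₃.extend y a b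

/-- The second derivative which the equation `C` prescribes for a solution through `q` with
slope `s`. -/
noncomputable def slopeDeriv (C : CubicODE (SmoothOn V)) (q : ℝ × ℝ) (s : ℝ) : ℝ :=
  C.a₃.extend q * s ^ 3 + 3 * C.a₂.extend q * s ^ 2 + 3 * C.a₁.extend q * s + C.a₀.extend q

/-- `Φ` maps the graph of every solution of `C` lying in `W` into an affine line. -/
def MapsSolutionsToLines (C : CubicODE (SmoothOn V)) (Φ : ℝ × ℝ → ℝ × ℝ) (W : Set (ℝ × ℝ)) :
    Prop :=
  ∀ (y : ℝ → ℝ) (a b : ℝ), C.IsSolution W y a b → ∃ α β γ : ℝ, (α, β) ≠ (0, 0) ∧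
    ∀ x ∈ Ioo a b, α * (Φ (x, y x)).1 + β * (Φ (x, y x)).2 = γ

variable {C : CubicODE (SmoothOn V)} {W : Set (ℝ × ℝ)} {y : ℝ → ℝ} {a b : ℝ}

lemma isSolution_iff : C.IsSolution W y a b ↔ ∀ x ∈ Ioo a b, (x, y x) ∈ W ∧
    HasDerivAt y (deriv y x) x ∧
      HasDerivAt (deriv y) (C.slopeDeriv (x, y x) (deriv y x)) x := by
  simp only [IsSolution, IsODESolution, slopeDeriv, extend_smul, Pi.smul_apply, smul_eq_mul]
  refine forall₂_congr fun x _ => and_congr_right fun _ => and_congr hasDerivAt_deriv_iff.symm ?_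
  exact ⟨fun h => h.2 ▸ h.1.hasDerivAt, fun h => ⟨h.differentiableAt, h.deriv⟩⟩

/-- The normal tractor connection of the projective structure of `C`, in the trivialisation by
`1`-jets: its parallel sections are the `(f, fₓ, f_y)` for which `f` has zero projective Hessian. -/
noncomputable def tractorForm (C : CubicODE (SmoothOn V)) :
    ℝ × ℝ → ℝ × ℝ →L[ℝ] (Fin 3 → ℝ) →L[ℝ] (Fin 3 → ℝ) :=
  connectionForm (mulVecCLM (C.tractorX (dx V) (dy V))) (mulVecCLM (C.tractorY (dx V) (dy V)))

lemma contDiffOn_tractorForm : ContDiffOn ℝ ∞ C.tractorForm V := fun _ hq =>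
  (contDiffAt_connectionForm (E := Fin 3 → ℝ)
    ((contDiffOn_mulVecCLM _).contDiffAt (V.isOpen.mem_nhds hq))
    ((contDiffOn_mulVecCLM _).contDiffAt (V.isOpen.mem_nhds hq))).contDiffWithinAt

lemma isFlatAt_tractorForm (h₁ : C.L₁ (dx V) (dy V) = 0) (h₂ : C.L₂ (dx V) (dy V) = 0) (q : V) :
    IsFlatAt C.tractorForm q := by
  refine isFlatAt_connectionForm_mulVecCLM (sub_eq_zero.1 ?_) q
  rw [C.tractor_curvature (dx V) (dy V) (dir_comm _ _), h₁, h₂]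
  ext i j
  fin_cases i <;> fin_cases j <;> simp

-- Along a solution, `z = X₀` and `w = X₁ + y' X₂` satisfy `z' = w` and `w' = B w + K z`: the other
-- two components of the parallel section enter only through `w`.
lemma eqOn_zero_of_isSolution (hW : W ⊆ V) {X : ℝ × ℝ → Fin 3 → ℝ}
    (hX : IsParallelOn C.tractorForm X W) (hy : C.IsSolution W y a b) {t₀ : ℝ} (ht₀ : t₀ ∈ Ioo a b)
    (hz : X (t₀, y t₀) 0 = 0) (hw : X (t₀, y t₀) 1 + deriv y t₀ * X (t₀, y t₀) 2 = 0) :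
    EqOn (fun t => X (t, y t) 0) 0 (Ioo a b) := by
  rw [isSolution_iff] at hy
  have hgraph : ContinuousOn (fun t => (t, y t)) (Ioo a b) := fun t ht =>
    (continuousAt_id.prodMk (hy t ht).2.1.continuousAt).continuousWithinAt
  have hcoeff (f : SmoothOn V) : ContinuousOn (fun t => f.extend (t, y t)) (Ioo a b) :=
    f.contDiffOn_extend.continuousOn.comp hgraph fun t ht => hW (hy t ht).1
  have hext (t) (ht : t ∈ Ioo a b) (f : SmoothOn V) :
      f.extend (t, y t) = f.1 ⟨(t, y t), hW (hy t ht).1⟩ := f.extend_apply ⟨_, _⟩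
  have hslope : ContinuousOn (deriv y) (Ioo a b) := fun t ht =>
    (hy t ht).2.2.continuousAt.continuousWithinAt
  have hder : ∀ t ∈ Ioo a b, ∀ i, HasDerivAt (fun τ => X (τ, y τ) i)
      ((mulVecCLM (C.tractorX (dx V) (dy V)) (t, y t) (X (t, y t))
        + deriv y t • mulVecCLM (C.tractorY (dx V) (dy V)) (t, y t) (X (t, y t))) i) t :=
    fun t ht => hasDerivAt_pi.1 (hX.hasDerivAt_graph (hy t ht).1 (hy t ht).2.1)
  refine eqOn_zero_of_hasDerivAt_linear_second_order
    (w := fun t => X (t, y t) 1 + deriv y t * X (t, y t) 2)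
    (B := fun t => C.a₁.extend (t, y t) + 2 * deriv y t * C.a₂.extend (t, y t)
      + deriv y t ^ 2 * C.a₃.extend (t, y t))
    (C := fun t => (C.schoutenXX (dx V) (dy V)).extend (t, y t)
      + 2 * deriv y t * (C.schoutenXY (dx V) (dy V)).extend (t, y t)
      + deriv y t ^ 2 * (C.schoutenYY (dx V) (dy V)).extend (t, y t))
    ?_ ?_ (fun t ht => ?_) (fun t ht => ?_) ht₀ hz hw
  · exact ((hcoeff _).add ((continuousOn_const.mul hslope).mul (hcoeff _))).add
      ((hslope.pow 2).mul (hcoeff _))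
  · exact ((hcoeff _).add ((continuousOn_const.mul hslope).mul (hcoeff _))).add
      ((hslope.pow 2).mul (hcoeff _))
  · refine (hder t ht 0).congr_deriv ?_
    simp [tractorX, tractorY, mulVec, dotProduct, Fin.sum_univ_three, hext t ht]
  · refine ((hder t ht 1).add ((hy t ht).2.2.mul (hder t ht 2))).congr_deriv ?_
    simp only [tractorX, mulVecCLM_apply, hext t ht, tractorY, Fin.isValue, Pi.add_apply, mulVec,
      dotProduct, map_apply, of_apply, cons_val', cons_val_fin_one, cons_val_one, cons_val_zero,
      Fin.sum_univ_three, cons_val, NegMemClass.coe_neg, Pi.neg_apply, neg_mul, Pi.smul_apply,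
      smul_eq_mul, slopeDeriv]
    ring

end CubicODE
end Solutions

section Straightening

open SmoothOn

variable {V : Opens (ℝ × ℝ)} {C : CubicODE (SmoothOn V)} {W : Set (ℝ × ℝ)}

namespace CubicODE

lemma MapsSolutionsToLines.mono {Φ : ℝ × ℝ → ℝ × ℝ} {W' : Set (ℝ × ℝ)}
    (h : C.MapsSolutionsToLines Φ W) (hW : W' ⊆ W) : C.MapsSolutionsToLines Φ W' :=
  fun y a b hy => h y a b fun x hx => ⟨hW (hy x hx).1, (hy x hx).2⟩

lemma exists_linear_relation_of_isSolution {F : Fin 3 → ℝ × ℝ → Fin 3 → ℝ}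
    (hF : ∀ i, IsParallelOn C.tractorForm (F i) W) (hW : W ⊆ V) {y : ℝ → ℝ} {a b : ℝ}
    (hy : C.IsSolution W y a b) :
    ∃ c : Fin 3 → ℝ, c ≠ 0 ∧ ∀ t ∈ Ioo a b, ∑ i, c i * F i (t, y t) 0 = 0 := by
  rcases (Ioo a b).eq_empty_or_nonempty with hemp | ⟨t₀, ht₀⟩
  · exact ⟨1, one_ne_zero, by simp [hemp]⟩
  let q := (t₀, y t₀)
  let initialData : (Fin 3 → ℝ) →ₗ[ℝ] ℝ × ℝ :=
    Fintype.linearCombination ℝ fun i => (F i q 0, F i q 1 + deriv y t₀ * F i q 2)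
  obtain ⟨c, hc, hc₀⟩ := Submodule.exists_mem_ne_zero_of_ne_bot <|
    initialData.ker_ne_bot_of_finrank_lt (by simp)
  obtain ⟨hz, hw⟩ := Prod.ext_iff.1 (LinearMap.mem_ker.1 hc)
  simp only [initialData, q, Fintype.linearCombination_apply, Fin.sum_univ_three, Prod.fst_add,
    Prod.snd_add, Prod.smul_fst, Prod.smul_snd, smul_eq_mul, Prod.fst_zero, Prod.snd_zero] at hz hw
  refine ⟨c, hc₀, fun t ht => ?_⟩
  have hzero : EqOn (fun t => (∑ i, c i • F i (t, y t)) 0) 0 (Ioo a b) := by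
    apply eqOn_zero_of_isSolution hW (IsParallelOn.sum_smul hF c) hy ht₀ <;>
      simp only [Fin.sum_univ_three, Pi.add_apply, Pi.smul_apply, smul_eq_mul]
    · exact hz
    · linear_combination hw
  simpa using hzero ht

/-- The affine chart of the projective plane, with homogeneous coordinates given by the leading
components of the sections `F 0`, `F 1`, `F 2`. -/
noncomputable def affineChart (F : Fin 3 → ℝ × ℝ → Fin 3 → ℝ) (q : ℝ × ℝ) : ℝ × ℝ :=
  (F 1 q 0 / F 0 q 0, F 2 q 0 / F 0 q 0)

lemma mapsSolutionsToLines_affineChart {F : Fin 3 → ℝ × ℝ → Fin 3 → ℝ}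
    (hF : ∀ i, IsParallelOn C.tractorForm (F i) W) (hW : W ⊆ V) (hne : ∀ q ∈ W, F 0 q 0 ≠ 0) :
    C.MapsSolutionsToLines (affineChart F) W := by
  intro y a b hy
  rcases (Ioo a b).eq_empty_or_nonempty with hemp | ⟨t₀, ht₀⟩
  · exact ⟨1, 0, 0, by simp, by simp [hemp]⟩
  obtain ⟨c, hc₀, hc⟩ := exists_linear_relation_of_isSolution hF hW hy
  simp only [Fin.sum_univ_three] at hc
  refine ⟨c 1, c 2, -c 0, fun h => hc₀ ?_, fun t ht => ?_⟩
  · obtain ⟨h₁, h₂⟩ := Prod.mk.inj h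
    have h₀ : c 0 = 0 := by simpa [h₁, h₂, hne _ (hy t₀ ht₀).1] using hc t₀ ht₀
    ext i
    fin_cases i <;> assumption
  · have hne_t : F 0 (t, y t) 0 ≠ 0 := hne _ (hy t ht).1
    simp only [affineChart]
    field_simp
    linear_combination hc t ht

lemma hasFDerivAt_affineChart {F : Fin 3 → ℝ × ℝ → Fin 3 → ℝ} {p : V}
    (hF : ∀ i, IsParallelOn C.tractorForm (F i) {↑p}) (hp : ∀ i, F i p = Pi.single i 1) :
    HasFDerivAt (affineChart F) (ContinuousLinearMap.id ℝ (ℝ × ℝ)) p := by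
  have hlead (i) := hasFDerivAt_pi'.1 (hF i p rfl) 0
  have h₀ : F 0 p 0 ≠ 0 := by simp [hp]
  have hinv := (hasDerivAt_inv h₀).comp_hasFDerivAt p.1 (hlead 0)
  refine (((hlead 1).mul hinv).prodMk ((hlead 2).mul hinv)).congr_fderiv ?_
  ext <;> simp [hp, tractorForm, tractorX, tractorY]

theorem exists_straightening (h₁ : C.L₁ (dx V) (dy V) = 0) (h₂ : C.L₂ (dx V) (dy V) = 0)
    {p : ℝ × ℝ} (hp : p ∈ V) :
    ∃ W ⊆ (V : Set (ℝ × ℝ)), IsOpen W ∧ p ∈ W ∧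
      ∃ Φ Ψ, IsDiffeoOntoOpen Φ Ψ W ∧ C.MapsSolutionsToLines Φ W := by
  have hA : ContDiffAt ℝ 2 C.tractorForm p :=
    (contDiffOn_tractorForm.contDiffAt (V.isOpen.mem_nhds hp)).of_le ENat.LEInfty.out
  have hflat : ∀ᶠ q in 𝓝 p, IsFlatAt C.tractorForm q :=
    (V.isOpen.eventually_mem hp).mono fun q hq => isFlatAt_tractorForm h₁ h₂ ⟨q, hq⟩
  obtain ⟨F, hFp, r, hr, hF⟩ := exists_parallel_frame hA hflat fun i => Pi.single i (1 : ℝ)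
  let D := ball p r ∩ V
  have hD : IsOpen D := isOpen_ball.inter V.isOpen
  have hFD (i) : ContDiffOn ℝ ∞ (fun q => F i q 0) D := contDiffOn_pi.1
    (((hF i).mono inter_subset_left).contDiffOn hD
      (contDiffOn_tractorForm.mono inter_subset_right)) 0
  let D' := D ∩ {q | F 0 q 0 ≠ 0}
  have hD' : IsOpen D' := (hFD 0).continuousOn.isOpen_inter_preimage hD isOpen_ne
  have hpD' : p ∈ D' := ⟨⟨mem_ball_self hr, hp⟩, by simp [hFp]⟩
  have hdiv (i) : ContDiffOn ℝ ∞ (fun q => F i q 0 / F 0 q 0) D' :=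
    ((hFD i).mono inter_subset_left).div ((hFD 0).mono inter_subset_left) fun _ hq => hq.2
  obtain ⟨W, hWD', hW, hpW, Ψ, hΦ⟩ := exists_isDiffeoOntoOpen (Φ := affineChart F)
    (e := .refl ℝ _) hD' ((hdiv 1).prodMk (hdiv 2)) hpD' <| hasFDerivAt_affineChart (p := ⟨p, hp⟩)
      (fun i => (hF i).mono (singleton_subset_iff.2 (mem_ball_self hr))) hFp
  refine ⟨W, fun q hq => (hWD' hq).1.2, hW, hpW, affineChart F, Ψ, hΦ, ?_⟩
  exact (mapsSolutionsToLines_affineChart (fun i => (hF i).mono fun q hq => hq.1.1)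
    (fun q hq => hq.1.2) fun q hq => hq.2).mono hWD'

end CubicODE

end Straightening

section Invariance

open SmoothOn

variable {V : Opens (ℝ × ℝ)} {C : CubicODE (SmoothOn V)}

namespace SmoothOn

lemma fderiv_extend_prod (f : SmoothOn V) (q : V) (a b : ℝ) :
    fderiv ℝ f.extend q (a, b) = a * (dx V f).1 q + b * (dy V f).1 q := by
  rw [dir_apply, dir_apply, ← smul_eq_mul, ← smul_eq_mul, ← map_smul, ← map_smul, ← map_add]
  simp

lemma hasDerivAt_extend_graph (f : SmoothOn V) {y : ℝ → ℝ} {t s : ℝ} (hq : (t, y t) ∈ V)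
    (hy : HasDerivAt y s t) :
    HasDerivAt (fun τ => f.extend (τ, y τ))
      ((dx V f).extend (t, y t) + s * (dy V f).extend (t, y t)) t := by
  refine ((f.hasFDerivAt_extend ⟨_, hq⟩).comp_hasDerivAt t
    ((hasDerivAt_id t).prodMk hy)).congr_deriv ?_
  rw [fderiv_extend_prod, one_mul, ← extend_apply, ← extend_apply]

lemma hasDerivAt_extend_graph₂ (f : SmoothOn V) {y y' : ℝ → ℝ} {t k : ℝ} (hq : (t, y t) ∈ V)
    (hy : HasDerivAt y (y' t) t) (hy' : HasDerivAt y' k t) :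
    HasDerivAt (fun τ => (dx V f).extend (τ, y τ) + y' τ * (dy V f).extend (τ, y τ))
      ((dx V (dx V f)).extend (t, y t) + 2 * y' t * (dx V (dy V f)).extend (t, y t)
        + y' t ^ 2 * (dy V (dy V f)).extend (t, y t) + k * (dy V f).extend (t, y t)) t := by
  refine (((dx V f).hasDerivAt_extend_graph hq hy).add
    (hy'.mul ((dy V f).hasDerivAt_extend_graph hq hy))).congr_deriv ?_
  rw [dir_comm (0, 1) (1, 0) f]
  ring

end SmoothOn

namespace CubicODE

lemma exists_isSolution (C : CubicODE (SmoothOn V)) (q : V) (s : ℝ) :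
    ∃ y a b, q.1.1 ∈ Ioo a b ∧ y q.1.1 = q.1.2 ∧ deriv y q.1.1 = s ∧ C.IsSolution V y a b := by
  obtain ⟨⟨x₀, y₀⟩, hq⟩ := q
  have hcoeff (f : SmoothOn V) :
      ContDiffAt ℝ 1 (fun z : ℝ × ℝ × ℝ => f.extend (z.1, z.2.1)) (x₀, y₀, s) :=
    ContDiffAt.comp (g := f.extend) _ ((f.contDiffAt_extend ⟨_, hq⟩).of_le (by simp))
      (contDiffAt_fst.prodMk (contDiffAt_fst.comp _ contDiffAt_snd))
  have hslope : ContDiffAt ℝ 1 (fun z : ℝ × ℝ × ℝ => C.slopeDeriv (z.1, z.2.1) z.2.2)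
      (x₀, y₀, s) := by
    have := hcoeff C.a₀
    have := hcoeff C.a₁
    have := hcoeff C.a₂
    have := hcoeff C.a₃
    unfold slopeDeriv
    fun_prop
  obtain ⟨y, hy₀, hys, ε, hε, hy⟩ := exists_hasDerivAt_second_order hslope
  have hx₀ : x₀ ∈ Ioo (x₀ - ε) (x₀ + ε) := by simp [hε]
  have hcont : ContinuousAt (fun x => (x, y x)) x₀ :=
    continuousAt_id.prodMk (hy x₀ hx₀).1.continuousAt
  have hgraph : ∀ᶠ x in 𝓝 x₀, (x, y x) ∈ V ∧ x ∈ Ioo (x₀ - ε) (x₀ + ε) :=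
    (hcont.eventually_mem (V.isOpen.mem_nhds (by rwa [hy₀]))).and (isOpen_Ioo.mem_nhds hx₀)
  obtain ⟨a, b, hab, hsub⟩ := mem_nhds_iff_exists_Ioo_subset.1 hgraph
  exact ⟨y, a, b, hab, hy₀, hys, isSolution_iff.2 fun x hx => ⟨(hsub hx).1, hy x (hsub hx).2⟩⟩

end CubicODE

lemma eq_of_forall_cubic_eq_zero {K : Type*} [Field K] [CharZero K] {a b c d : K}
    (h : ∀ s : K, a + b * s + c * s ^ 2 + d * s ^ 3 = 0) : a = 0 ∧ b = 0 ∧ c = 0 ∧ d = 0 := by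
  refine ⟨?_, ?_, ?_, ?_⟩
  · linear_combination h 0
  · linear_combination -h 0 / 2 + h 1 - h (-1) / 3 - h 2 / 6
  · linear_combination -h 0 + h 1 / 2 + h (-1) / 2
  · linear_combination h 0 / 2 - h 1 / 2 - h (-1) / 6 + h 2 / 6

lemma wronskian_eq_zero_of_linear_relation {u v u' v' : ℝ → ℝ} {u'' v'' α β γ a b t : ℝ}
    (ht : t ∈ Ioo a b) (hu : ∀ τ ∈ Ioo a b, HasDerivAt u (u' τ) τ)
    (hv : ∀ τ ∈ Ioo a b, HasDerivAt v (v' τ) τ) (hu' : HasDerivAt u' u'' t)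
    (hv' : HasDerivAt v' v'' t) (hαβ : (α, β) ≠ (0, 0))
    (h : ∀ τ ∈ Ioo a b, α * u τ + β * v τ = γ) : u' t * v'' - v' t * u'' = 0 := by
  have hnhds {τ : ℝ} (hτ : τ ∈ Ioo a b) : Ioo a b ∈ 𝓝 τ := isOpen_Ioo.mem_nhds hτ
  have h' : ∀ τ ∈ Ioo a b, α * u' τ + β * v' τ = 0 := fun τ hτ =>
    (((hu τ hτ).const_mul α).add ((hv τ hτ).const_mul β)).unique <|
      (hasDerivAt_const τ γ).congr_of_eventuallyEq <| by filter_upwards [hnhds hτ] using h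
  have h'' : α * u'' + β * v'' = 0 :=
    ((hu'.const_mul α).add (hv'.const_mul β)).unique <|
      (hasDerivAt_const t 0).congr_of_eventuallyEq <| by filter_upwards [hnhds ht] using h'
  by_contra hne
  refine hαβ (Prod.ext ?_ ?_)
  · refine (mul_eq_zero.1 ?_).resolve_right hne
    linear_combination v'' * h' t ht - v' t * h''
  · refine (mul_eq_zero.1 ?_).resolve_right hne
    linear_combination u' t * h'' - u'' * h' t ht

namespace CubicODE

/-- The Wronskian `u' v'' - v' u''` at `q`, along the solution of `C` through `q` with slope `s`. -/
noncomputable def wronskianAt (C : CubicODE (SmoothOn V)) (u v : SmoothOn V) (q : V) (s : ℝ) : ℝ :=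
  ((dx V u).1 q + s * (dy V u).1 q) * ((dx V (dx V v)).1 q + 2 * s * (dx V (dy V v)).1 q
      + s ^ 2 * (dy V (dy V v)).1 q + C.slopeDeriv q s * (dy V v).1 q)
    - ((dx V v).1 q + s * (dy V v).1 q) * ((dx V (dx V u)).1 q + 2 * s * (dx V (dy V u)).1 q
      + s ^ 2 * (dy V (dy V u)).1 q + C.slopeDeriv q s * (dy V u).1 q)

variable {u v : SmoothOn V}

lemma MapsSolutionsToLines.wronskianAt_eq_zero {Φ : ℝ × ℝ → ℝ × ℝ}
    (h : C.MapsSolutionsToLines Φ V) (hu : ∀ q : V, u.1 q = (Φ q).1)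
    (hv : ∀ q : V, v.1 q = (Φ q).2) (q : V) (s : ℝ) : C.wronskianAt u v q s = 0 := by
  obtain ⟨y, a, b, hq, hyq, hys, hy⟩ := C.exists_isSolution q s
  obtain ⟨α, β, γ, hαβ, hline⟩ := h y a b hy
  rw [isSolution_iff] at hy
  have hpt : ((q.1.1, y q.1.1) : ℝ × ℝ) = q := by rw [hyq]
  have hw := wronskian_eq_zero_of_linear_relation hq
    (fun τ hτ => u.hasDerivAt_extend_graph (hy τ hτ).1 (hy τ hτ).2.1)
    (fun τ hτ => v.hasDerivAt_extend_graph (hy τ hτ).1 (hy τ hτ).2.1)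
    (u.hasDerivAt_extend_graph₂ (hy _ hq).1 (hy _ hq).2.1 (hy _ hq).2.2)
    (v.hasDerivAt_extend_graph₂ (hy _ hq).1 (hy _ hq).2.1 (hy _ hq).2.2) hαβ
    (γ := γ) fun τ hτ => by
      rw [u.extend_apply ⟨_, (hy τ hτ).1⟩, v.extend_apply ⟨_, (hy τ hτ).1⟩, hu, hv]
      exact hline τ hτ
  simpa only [wronskianAt, hpt, hys, extend_apply] using hw

lemma isStraightenedBy_of_forall_wronskianAt_eq_zero (h : ∀ q s, C.wronskianAt u v q s = 0) :
    C.IsStraightenedBy (dx V) (dy V) u v := by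
  let J : SmoothOn V := jacobian (dx V) (dy V) u v
  let k₀ : SmoothOn V := C.a₀ * J - (dx V v * dx V (dx V u) - dx V u * dx V (dx V v))
  let k₁ : SmoothOn V := 3 * C.a₁ * J - (dy V v * dx V (dx V u) - dy V u * dx V (dx V v)
    + 2 * (dx V v * dx V (dy V u) - dx V u * dx V (dy V v)))
  let k₂ : SmoothOn V := 3 * C.a₂ * J - (dx V v * dy V (dy V u) - dx V u * dy V (dy V v)
    + 2 * (dy V v * dx V (dy V u) - dy V u * dx V (dy V v)))
  let k₃ : SmoothOn V := C.a₃ * J - (dy V v * dy V (dy V u) - dy V u * dy V (dy V v))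
  have hk (q : V) : k₀.1 q = 0 ∧ k₁.1 q = 0 ∧ k₂.1 q = 0 ∧ k₃.1 q = 0 :=
    eq_of_forall_cubic_eq_zero fun s => by
      rw [← h q s]
      simp only [k₀, k₁, k₂, k₃, J, jacobian, wronskianAt, slopeDeriv, extend_apply,
        AddSubgroupClass.coe_sub, MulMemClass.coe_mul, AddMemClass.coe_add, coe_ofNat,
        Pi.sub_apply, Pi.mul_apply, Pi.add_apply, Pi.ofNat_apply]
      ring
  exact ⟨sub_eq_zero.1 <| Subtype.ext <| funext fun q => (hk q).1,
    sub_eq_zero.1 <| Subtype.ext <| funext fun q => (hk q).2.1,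
    sub_eq_zero.1 <| Subtype.ext <| funext fun q => (hk q).2.2.1,
    sub_eq_zero.1 <| Subtype.ext <| funext fun q => (hk q).2.2.2⟩

end CubicODE

lemma IsDiffeoOntoOpen.injective_fderiv {E F : Type*} [NormedAddCommGroup E] [NormedSpace ℝ E]
    [NormedAddCommGroup F] [NormedSpace ℝ F] {Φ : E → F} {Ψ : F → E} {U : Set E}
    (h : IsDiffeoOntoOpen Φ Ψ U) (hU : IsOpen U) {q : E} (hq : q ∈ U) :
    Function.Injective (fderiv ℝ Φ q) := by
  have hΦ : HasFDerivAt Φ (fderiv ℝ Φ q) q :=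
    ((h.contDiffOn.contDiffAt (hU.mem_nhds hq)).differentiableAt (by simp)).hasFDerivAt
  have hΨ : HasFDerivAt Ψ (fderiv ℝ Ψ (Φ q)) (Φ q) :=
    ((h.contDiffOn_inv.contDiffAt (h.isOpen_image.mem_nhds ⟨q, hq, rfl⟩)).differentiableAt
      (by simp)).hasFDerivAt
  have hid : fderiv ℝ Ψ (Φ q) ∘L fderiv ℝ Φ q = .id ℝ E :=
    (hΨ.comp q hΦ).unique <| (hasFDerivAt_id q).congr_of_eventuallyEq <|
      h.leftInvOn.eqOn.eventuallyEq_of_mem (hU.mem_nhds hq)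
  exact Function.LeftInverse.injective fun w => DFunLike.congr_fun hid w

lemma det_ne_zero_of_injective {R : Type*} [CommRing R] [Nontrivial R] {a b c d : R}
    (h : Function.Injective fun w : R × R => (w.1 * a + w.2 * b, w.1 * c + w.2 * d)) :
    a * d - b * c ≠ 0 := by
  intro hdet
  have hac : (b, -a) = (0, 0) := h <| by
    ext <;> dsimp only
    · ring
    · linear_combination -hdet
  have hbd : (d, -c) = (0, 0) := h <| by
    ext <;> dsimp only
    · linear_combination hdet
    · ring
  simp only [Prod.mk.injEq, neg_eq_zero] at hac hbd
  have h₁₀ : ((1 : R), (0 : R)) = 0 := h <| by simp [hac, hbd]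
  simp at h₁₀

lemma IsDiffeoOntoOpen.isUnit_jacobian {Φ Ψ : ℝ × ℝ → ℝ × ℝ} {u v : SmoothOn V}
    (h : IsDiffeoOntoOpen Φ Ψ V) (hu : ∀ q : V, u.1 q = (Φ q).1) (hv : ∀ q : V, v.1 q = (Φ q).2) :
    IsUnit (CubicODE.jacobian (dx V) (dy V) u v) := by
  refine isUnit_of_ne_zero fun q => ?_
  have hΦ : Φ =ᶠ[𝓝 (q : ℝ × ℝ)] fun x => (u.extend x, v.extend x) := by
    filter_upwards [V.isOpen.mem_nhds q.2] with x hx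
    rw [u.extend_apply ⟨x, hx⟩, v.extend_apply ⟨x, hx⟩, hu, hv]
  refine det_ne_zero_of_injective ?_
  convert h.injective_fderiv V.isOpen q.2 using 2 with w
  rw [hΦ.fderiv_eq, ((u.hasFDerivAt_extend q).prodMk (v.hasFDerivAt_extend q)).fderiv,
    ContinuousLinearMap.prod_apply, fderiv_extend_prod, fderiv_extend_prod]

namespace CubicODE

theorem invariants_eq_zero_of_mapsSolutionsToLines {Φ Ψ : ℝ × ℝ → ℝ × ℝ}
    (hΦ : IsDiffeoOntoOpen Φ Ψ V) (h : C.MapsSolutionsToLines Φ V) :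
    C.L₁ (dx V) (dy V) = 0 ∧ C.L₂ (dx V) (dy V) = 0 := by
  let u : SmoothOn V := restrict (fun q => (Φ q).1) hΦ.contDiffOn.fst
  let v : SmoothOn V := restrict (fun q => (Φ q).2) hΦ.contDiffOn.snd
  have hstraight : C.IsStraightenedBy (dx V) (dy V) u v :=
    isStraightenedBy_of_forall_wronskianAt_eq_zero
      (h.wronskianAt_eq_zero (fun _ => rfl) fun _ => rfl)
  have h₃ := hstraight.three_mul_invariants_eq_zero (dir_comm _ _)
    (hΦ.isUnit_jacobian (fun _ => rfl) fun _ => rfl)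
  have hunit : IsUnit (3 : SmoothOn V) := isUnit_of_ne_zero (by simp)
  exact h₃.imp hunit.mul_right_eq_zero.1 hunit.mul_right_eq_zero.1

end CubicODE

end Invariance

section PartialDerivatives

open SmoothOn

variable {V : Opens (ℝ × ℝ)} {f : ℝ × ℝ → ℝ} {g : SmoothOn V}

lemma hasFDerivAt_of_forall_eq_coe (h : ∀ q : V, f q = g.1 q) (q : V) :
    HasFDerivAt f (fderiv ℝ g.extend q) q := by
  refine (g.hasFDerivAt_extend q).congr_of_eventuallyEq ?_
  filter_upwards [V.isOpen.mem_nhds q.2] with x hx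
  rw [g.extend_apply ⟨x, hx⟩, ← h]

lemma pdx_eq_dx (h : ∀ q : V, f q = g.1 q) (q : V) : pdx f q = (dx V g).1 q :=
  ((hasFDerivAt_of_forall_eq_coe h q).comp_hasDerivAt (q : ℝ × ℝ).1
    ((hasDerivAt_id _).prodMk (hasDerivAt_const _ _))).deriv

lemma pdy_eq_dy (h : ∀ q : V, f q = g.1 q) (q : V) : pdy f q = (dy V g).1 q :=
  ((hasFDerivAt_of_forall_eq_coe h q).comp_hasDerivAt (q : ℝ × ℝ).2
    ((hasDerivAt_const _ _).prodMk (hasDerivAt_id _))).deriv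

end PartialDerivatives

section FromCoefficients

open SmoothOn

variable {V : Opens (ℝ × ℝ)} {A0 A1 A2 A3 : ℝ × ℝ → ℝ}

namespace CubicODE

/-- The equation `y'' = A3 y'³ + A2 y'² + A1 y' + A0` over `C^∞(V)`. -/
noncomputable def ofContDiffOn (hA0 : ContDiffOn ℝ ∞ A0 V) (hA1 : ContDiffOn ℝ ∞ A1 V)
    (hA2 : ContDiffOn ℝ ∞ A2 V) (hA3 : ContDiffOn ℝ ∞ A3 V) : CubicODE (SmoothOn V) where
  a₀ := restrict A0 hA0
  a₁ := (1 / 3 : ℝ) • restrict A1 hA1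
  a₂ := (1 / 3 : ℝ) • restrict A2 hA2
  a₃ := restrict A3 hA3

variable {hA0 : ContDiffOn ℝ ∞ A0 V} {hA1 : ContDiffOn ℝ ∞ A1 V}
  {hA2 : ContDiffOn ℝ ∞ A2 V} {hA3 : ContDiffOn ℝ ∞ A3 V}

lemma L₁_ofContDiffOn_apply (q : V) :
    ((ofContDiffOn hA0 hA1 hA2 hA3).L₁ (dx V) (dy V)).1 q = Lio1 A0 A1 A2 A3 q := by
  have hx {f} (hf : ContDiffOn ℝ ∞ f V) := pdx_eq_dx (g := restrict f hf) fun _ => rfl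
  have hy {f} (hf : ContDiffOn ℝ ∞ f V) := pdy_eq_dy (g := restrict f hf) fun _ => rfl
  simp only [L₁, Lio1, ofContDiffOn, Derivation.map_smul, Algebra.mul_smul_comm,
    Algebra.smul_mul_assoc, AddMemClass.coe_add, AddSubgroupClass.coe_sub, SetLike.val_smul,
    MulMemClass.coe_mul, coe_ofNat, coe_restrict_apply, Pi.add_apply, Pi.sub_apply, Pi.smul_apply,
    Pi.mul_apply, Pi.ofNat_apply, smul_eq_mul, hx hA0, hy hA0, hy hA1, hx hA2, hy hA2,
    hx hA3, pdx_eq_dx (hy hA1), pdx_eq_dx (hx hA2), pdy_eq_dy (hy hA0)]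
  ring

lemma L₂_ofContDiffOn_apply (q : V) :
    ((ofContDiffOn hA0 hA1 hA2 hA3).L₂ (dx V) (dy V)).1 q = Lio2 A0 A1 A2 A3 q := by
  have hx {f} (hf : ContDiffOn ℝ ∞ f V) := pdx_eq_dx (g := restrict f hf) fun _ => rfl
  have hy {f} (hf : ContDiffOn ℝ ∞ f V) := pdy_eq_dy (g := restrict f hf) fun _ => rfl
  simp only [L₂, Lio2, ofContDiffOn, Derivation.map_smul, Algebra.mul_smul_comm,
    Algebra.smul_mul_assoc, AddMemClass.coe_add, AddSubgroupClass.coe_sub, SetLike.val_smul,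
    MulMemClass.coe_mul, coe_ofNat, coe_restrict_apply, Pi.add_apply, Pi.sub_apply, Pi.smul_apply,
    Pi.mul_apply, Pi.ofNat_apply, smul_eq_mul, hy hA0, hx hA1, hy hA1, hx hA2, hx hA3,
    hy hA3, pdx_eq_dx (hy hA2), pdy_eq_dy (hy hA1), pdx_eq_dx (hx hA3)]
  ring

lemma invariants_ofContDiffOn_eq_zero_iff :
    ((ofContDiffOn hA0 hA1 hA2 hA3).L₁ (dx V) (dy V) = 0 ∧
      (ofContDiffOn hA0 hA1 hA2 hA3).L₂ (dx V) (dy V) = 0) ↔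
    ∀ p ∈ V, Lio1 A0 A1 A2 A3 p = 0 ∧ Lio2 A0 A1 A2 A3 p = 0 := by
  simp only [Subtype.ext_iff, funext_iff, L₁_ofContDiffOn_apply, L₂_ofContDiffOn_apply]
  simp [forall_and]

lemma isSolution_ofContDiffOn_iff {W : Set (ℝ × ℝ)} (hW : W ⊆ V) {y : ℝ → ℝ} {a b : ℝ} :
    (ofContDiffOn hA0 hA1 hA2 hA3).IsSolution W y a b ↔ IsODESolution W A0 A1 A2 A3 y a b := by
  refine forall₂_congr fun x _ => and_congr_right fun hx => ?_
  have hext (f : SmoothOn V) : f.extend (x, y x) = f.1 ⟨_, hW hx⟩ := f.extend_apply ⟨_, _⟩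
  simp [hext, ofContDiffOn]

end CubicODE

/-- Near `p`, a point transformation `Φ` carries the solutions of
`y'' = A3 y'³ + A2 y'² + A1 y' + A0` into straight lines. -/
def LinearizableNear (U : Set (ℝ × ℝ)) (A0 A1 A2 A3 : ℝ × ℝ → ℝ) (p : ℝ × ℝ) : Prop :=
  ∃ U' : Set (ℝ × ℝ), IsOpen U' ∧ p ∈ U' ∧ U' ⊆ U ∧
    ∃ Φ Φinv : ℝ × ℝ → ℝ × ℝ,
      ContDiffOn ℝ ∞ Φ U' ∧ InjOn Φ U' ∧ IsOpen (Φ '' U') ∧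
      ContDiffOn ℝ ∞ Φinv (Φ '' U') ∧ (∀ q ∈ U', Φinv (Φ q) = q) ∧
      ∀ (y : ℝ → ℝ) (a b : ℝ), IsODESolution U' A0 A1 A2 A3 y a b →
        ∃ α β γ : ℝ, (α, β) ≠ (0, 0) ∧
          ∀ x ∈ Ioo a b, α * (Φ (x, y x)).1 + β * (Φ (x, y x)).2 = γ

theorem liouville_tresse_general (U : Set (ℝ × ℝ)) (hU : IsOpen U) (A0 A1 A2 A3 : ℝ × ℝ → ℝ)
    (hA0 : ContDiffOn ℝ ∞ A0 U) (hA1 : ContDiffOn ℝ ∞ A1 U)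
    (hA2 : ContDiffOn ℝ ∞ A2 U) (hA3 : ContDiffOn ℝ ∞ A3 U) :
    (∀ p ∈ U, Lio1 A0 A1 A2 A3 p = 0 ∧ Lio2 A0 A1 A2 A3 p = 0) ↔
      ∀ p ∈ U, LinearizableNear U A0 A1 A2 A3 p := by
  refine ⟨fun hL p hp => ?_, fun hlin p hp => ?_⟩
  · let V : Opens (ℝ × ℝ) := ⟨U, hU⟩
    let C : CubicODE (SmoothOn V) := .ofContDiffOn hA0 hA1 hA2 hA3
    obtain ⟨h₁, h₂⟩ : C.L₁ (dx V) (dy V) = 0 ∧ C.L₂ (dx V) (dy V) = 0 :=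
      CubicODE.invariants_ofContDiffOn_eq_zero_iff.2 hL
    obtain ⟨W, hWU, hW, hpW, Φ, Ψ, hΦ, hlines⟩ := C.exists_straightening h₁ h₂ hp
    exact ⟨W, hW, hpW, hWU, Φ, Ψ, hΦ.contDiffOn, hΦ.leftInvOn.injOn, hΦ.isOpen_image,
      hΦ.contDiffOn_inv, hΦ.leftInvOn,
      fun y a b hy => hlines y a b ((CubicODE.isSolution_ofContDiffOn_iff hWU).2 hy)⟩
  · obtain ⟨W, hW, hpW, hWU, Φ, Ψ, hΦ, -, himage, hΨ, hinv, hlines⟩ := hlin p hp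
    let V : Opens (ℝ × ℝ) := ⟨W, hW⟩
    let C : CubicODE (SmoothOn V) :=
      .ofContDiffOn (hA0.mono hWU) (hA1.mono hWU) (hA2.mono hWU) (hA3.mono hWU)
    have hC : C.MapsSolutionsToLines Φ V := fun y a b hy =>
      hlines y a b ((CubicODE.isSolution_ofContDiffOn_iff subset_rfl).1 hy)
    exact CubicODE.invariants_ofContDiffOn_eq_zero_iff.1
      (C.invariants_eq_zero_of_mapsSolutionsToLines ⟨hΦ, himage, hΨ, hinv⟩ hC) p hpW

end FromCoefficients

/-- **Liouville–Tresse trivialisability (cubic case).** `L₁ = L₂ = 0` on `U` iff near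
every point there is a point transformation (local diffeomorphism) sending the graphs of
all solutions of the ODE into affine lines, i.e. the ODE is locally equivalent to
`ȳ'' = 0`. -/
theorem liouville_tresse (U : Set (ℝ × ℝ)) (hU : IsOpen U) (hUconn : IsConnected U)
    (A0 A1 A2 A3 : ℝ × ℝ → ℝ)
    (hA0 : ContDiffOn ℝ (⊤ : ℕ∞) A0 U) (hA1 : ContDiffOn ℝ (⊤ : ℕ∞) A1 U)
    (hA2 : ContDiffOn ℝ (⊤ : ℕ∞) A2 U) (hA3 : ContDiffOn ℝ (⊤ : ℕ∞) A3 U) :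
    (∀ p ∈ U, Lio1 A0 A1 A2 A3 p = 0 ∧ Lio2 A0 A1 A2 A3 p = 0) ↔
    (∀ p ∈ U, ∃ U' : Set (ℝ × ℝ), IsOpen U' ∧ p ∈ U' ∧ U' ⊆ U ∧
      ∃ Φ Φinv : ℝ × ℝ → ℝ × ℝ,
        ContDiffOn ℝ (⊤ : ℕ∞) Φ U' ∧ Set.InjOn Φ U' ∧ IsOpen (Φ '' U') ∧
        ContDiffOn ℝ (⊤ : ℕ∞) Φinv (Φ '' U') ∧ (∀ q ∈ U', Φinv (Φ q) = q) ∧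
        ∀ (y : ℝ → ℝ) (a b : ℝ), IsODESolution U' A0 A1 A2 A3 y a b →
          ∃ α β γ : ℝ, (α, β) ≠ (0, 0) ∧
            ∀ x ∈ Set.Ioo a b,
              α * (Φ (x, y x)).1 + β * (Φ (x, y x)).2 = γ) :=
  liouville_tresse_general U hU A0 A1 A2 A3 hA0 hA1 hA2 hA3
end

section
/- The quartic polynomial q(t) = t⁴ − 11286t² − 850968t − 19529683 has a real root, and the three polynomials q(t), r(t) = 3t⁵ + 529t⁴ + 222t³ − 2131102t² − 103196849t − 1977900451, and s(t) = t³ − 213t² − 7849t − 19235 have no common root in ℂ. -/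
/-!
A real polynomial with nonnegative leading coefficient tends to `+∞` unless it is constant, so it
has a real root as soon as it takes a nonpositive value; here `q(0) < 0`.

The resultant of `q` and `s` is an integer lying in the ideal `(q, s)` of `ℤ[X]`, so a common root
in characteristic zero would force it to be `0`. But modulo `3` the two polynomials become `X⁴ - 1`
and `X³ - X + 1`, which are coprime; since `q` is monic, the resultant commutes with this reduction,
and hence is not divisible by `3`.
-/

open Polynomial

theorem exists_isRoot_of_leadingCoeff_nonneg_of_eval_nonpos {p : ℝ[X]} {a : ℝ}
    (hp : 0 ≤ p.leadingCoeff) (ha : p.eval a ≤ 0) : ∃ x, p.IsRoot x := by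
  rcases le_or_gt p.degree 0 with hdeg | hdeg
  · rw [eq_C_of_degree_le_zero hdeg, leadingCoeff_C] at hp
    rw [eq_C_of_degree_le_zero hdeg, eval_C] at ha
    refine ⟨a, ?_⟩
    rw [eq_C_of_degree_le_zero hdeg, IsRoot, eval_C, le_antisymm ha hp]
  · have htop := p.tendsto_atTop_of_leadingCoeff_nonneg hdeg hp
    exact mem_range_of_exists_le_of_exists_ge p.continuous ⟨a, ha⟩
      (htop.eventually_ge_atTop 0).exists

section Resultant

variable {R S : Type*} [CommRing R] [CommRing S] {f g : R[X]}

theorem map_resultant_of_monic (φ : R →+* S) (hf : f.Monic) :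
    φ (f.resultant g) = (f.map φ).resultant (g.map φ) := by
  nontriviality S
  obtain ⟨d, hd⟩ := Nat.exists_eq_add_of_le (natDegree_map_le (f := φ) (p := g))
  have hlead : (f.map φ).coeff (f.map φ).natDegree = 1 := (hf.map φ).coeff_natDegree
  rw [← resultant_map_map, hd, ← hf.natDegree_map φ, resultant_add_right_deg _ _ _ _ _ le_rfl,
    hlead, one_pow, one_mul]

theorem resultant_ne_zero_of_isCoprime_map [Nontrivial S] (φ : R →+* S) (hf : f.Monic)
    (h : IsCoprime (f.map φ) (g.map φ)) : f.resultant g ≠ 0 := by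
  have hunit := (isUnit_resultant_iff_isCoprime (hf.map φ)).mpr h
  rw [← map_resultant_of_monic φ hf] at hunit
  exact ne_zero_of_map hunit.ne_zero

theorem algebraMap_resultant_eq_zero_of_monic {A : Type*} [Ring A] [Algebra R A] (hf : f.Monic)
    {z : A} (hfz : aeval z f = 0) (hgz : aeval z g = 0) :
    algebraMap R A (f.resultant g) = 0 := by
  by_cases hdeg : f.natDegree = 0
  · obtain rfl := hf.natDegree_eq_zero.mp hdeg
    have : Subsingleton A := subsingleton_of_zero_eq_one (by simpa using hfz.symm)
    exact Subsingleton.elim _ _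
  · obtain ⟨a, b, -, -, hbezout⟩ :=
      exists_mul_add_mul_eq_C_resultant f g le_rfl le_rfl (.inl hdeg)
    simpa [hfz, hgz] using (congrArg (aeval z) hbezout).symm

theorem aeval_ne_zero_of_isCoprime_map {A : Type*} [Ring A] [Algebra R A] [FaithfulSMul R A]
    [Nontrivial S] (φ : R →+* S) (hf : f.Monic) (h : IsCoprime (f.map φ) (g.map φ)) (z : A) :
    aeval z f ≠ 0 ∨ aeval z g ≠ 0 := by
  by_contra! hz
  refine resultant_ne_zero_of_isCoprime_map φ hf h ?_
  rw [← FaithfulSMul.algebraMap_eq_zero_iff R A]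
  exact algebraMap_resultant_eq_zero_of_monic hf hz.1 hz.2

end Resultant

theorem isCoprime_pow_four_sub_one_of_charP_three {R : Type*} [CommRing R] [CharP R 3] (x : R) :
    IsCoprime (x ^ 4 - 1) (x ^ 3 - x + 1) := by
  have three_eq_zero : (3 : R) = 0 := mod_cast CharP.cast_eq_zero R 3
  -- The cofactors come from the Euclidean algorithm over the field with three elements.
  refine ⟨-(x - 1) ^ 2, x ^ 3 + x ^ 2 - x, ?_⟩
  linear_combination (x ^ 5 - x ^ 4 + x ^ 2 - x) * three_eq_zero

/-- The fifth-order metrisability obstruction `q`, as an integer polynomial so that it can be both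
evaluated in any ring and reduced modulo a prime. -/
noncomputable def fifthOrderObstruction : ℤ[X] :=
  X ^ 4 - 11286 * X ^ 2 - 850968 * X - 19529683

/-- The cubic sixth-order metrisability obstruction `s`, as an integer polynomial. -/
noncomputable def cubicSixthOrderObstruction : ℤ[X] :=
  X ^ 3 - 213 * X ^ 2 - 7849 * X - 19235

theorem fifthOrderObstruction_monic : fifthOrderObstruction.Monic := by
  unfold fifthOrderObstruction
  monicity!

section Aeval

variable {A : Type*} [Ring A] (z : A)

theorem aeval_fifthOrderObstruction :
    aeval z fifthOrderObstruction = z ^ 4 - 11286 * z ^ 2 - 850968 * z - 19529683 := by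
  simp [fifthOrderObstruction, map_ofNat (aeval z)]

theorem aeval_cubicSixthOrderObstruction :
    aeval z cubicSixthOrderObstruction = z ^ 3 - 213 * z ^ 2 - 7849 * z - 19235 := by
  simp [cubicSixthOrderObstruction, map_ofNat (aeval z)]

end Aeval

theorem exists_real_aeval_fifthOrderObstruction_eq_zero :
    ∃ t : ℝ, aeval t fifthOrderObstruction = 0 := by
  have hlead : 0 ≤ (fifthOrderObstruction.map (algebraMap ℤ ℝ)).leadingCoeff := by
    rw [(fifthOrderObstruction_monic.map _).leadingCoeff]
    exact zero_le_one
  have hneg : (fifthOrderObstruction.map (algebraMap ℤ ℝ)).eval 0 ≤ 0 := by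
    rw [eval_map_algebraMap, aeval_fifthOrderObstruction]
    norm_num
  obtain ⟨t, ht⟩ := exists_isRoot_of_leadingCoeff_nonneg_of_eval_nonpos hlead hneg
  exact ⟨t, by rwa [IsRoot, eval_map_algebraMap] at ht⟩

theorem map_fifthOrderObstruction_zmod_three :
    fifthOrderObstruction.map (Int.castRingHom (ZMod 3)) = X ^ 4 - 1 := by
  simp only [fifthOrderObstruction, Polynomial.map_sub, Polynomial.map_mul, Polynomial.map_pow,
    map_X, Polynomial.map_ofNat]
  reduce_mod_char

theorem map_cubicSixthOrderObstruction_zmod_three :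
    cubicSixthOrderObstruction.map (Int.castRingHom (ZMod 3)) = X ^ 3 - X + 1 := by
  simp only [cubicSixthOrderObstruction, Polynomial.map_sub, Polynomial.map_mul,
    Polynomial.map_pow, map_X, Polynomial.map_ofNat]
  reduce_mod_char

theorem isCoprime_map_obstructions_zmod_three :
    IsCoprime (fifthOrderObstruction.map (Int.castRingHom (ZMod 3)))
      (cubicSixthOrderObstruction.map (Int.castRingHom (ZMod 3))) := by
  rw [map_fifthOrderObstruction_zmod_three, map_cubicSixthOrderObstruction_zmod_three]
  exact isCoprime_pow_four_sub_one_of_charP_three X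

theorem obstruction_polynomials_no_common_root_general {A : Type*} [Ring A] [CharZero A] :
    (∃ t : ℝ, t ^ 4 - 11286 * t ^ 2 - 850968 * t - 19529683 = 0) ∧
    ¬ ∃ z : A,
      (z ^ 4 - 11286 * z ^ 2 - 850968 * z - 19529683 = 0) ∧
      (z ^ 3 - 213 * z ^ 2 - 7849 * z - 19235 = 0) := by
  simp only [← aeval_fifthOrderObstruction, ← aeval_cubicSixthOrderObstruction]
  refine ⟨exists_real_aeval_fifthOrderObstruction_eq_zero, ?_⟩
  rintro ⟨z, hq, hs⟩
  exact (aeval_ne_zero_of_isCoprime_map _ fifthOrderObstruction_monic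
    isCoprime_map_obstructions_zmod_three z).elim (· hq) (· hs)

/-- The quartic `q(t) = t⁴ − 11286t² − 850968t − 19529683` has a real root, and the three
polynomials `q`, `r`, `s` (the fifth- and sixth-order metrisability obstructions for the
family `y'' = c eˣ + e^{−x}(y')²`, in the variable `t = 48c − 11`) have no common complex
root. -/
theorem obstruction_polynomials_no_common_root :
    (∃ t : ℝ, t ^ 4 - 11286 * t ^ 2 - 850968 * t - 19529683 = 0) ∧
    ¬ ∃ z : ℂ,
      (z ^ 4 - 11286 * z ^ 2 - 850968 * z - 19529683 = 0) ∧
      (3 * z ^ 5 + 529 * z ^ 4 + 222 * z ^ 3 - 2131102 * z ^ 2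
        - 103196849 * z - 1977900451 = 0) ∧
      (z ^ 3 - 213 * z ^ 2 - 7849 * z - 19235 = 0) := by
  obtain ⟨hreal, hcommon⟩ := obstruction_polynomials_no_common_root_general (A := ℂ)
  exact ⟨hreal, fun ⟨z, hq, _, hs⟩ => hcommon ⟨z, hq, hs⟩⟩
end
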